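/- arXiv:2408.02744 — 6 statements merged into one kernel-verified Lean document; each statement's English description precedes it below -/
import Mathlib

section
/- Let Λ be an even, self-dual Lorentzian lattice of signature (m,n). Then the following are equivalent: (1) the quotient group Λ/Λ_0 is finite; (2) the ℤ-module Λ_0 has rank m+n; (3) the ℤ-module Λ_1^0 has rank m; (4) the ℤ-module Λ_2^0 has rank n. -/
open Finset

noncomputable section

/-- The Lorentzian inner product of signature `(m,n)` on `ℝ^m × ℝ^n`. -/
def lorentzForm {m n : ℕ} (x y : (Fin m → ℝ) × (Fin n → ℝ)) : ℝ :=
  (∑ i, x.1 i * y.1 i) - (∑ j, x.2 j * y.2 j)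

/-- `Λ` is an even lattice: `λ ∘ λ ∈ 2ℤ` for all `λ ∈ Λ`. -/
def IsEvenLat {m n : ℕ} (Λ : Submodule ℤ ((Fin m → ℝ) × (Fin n → ℝ))) : Prop :=
  ∀ x ∈ Λ, ∃ k : ℤ, lorentzForm x x = 2 * k

/-- `Λ` is an integral lattice: `λ ∘ μ ∈ ℤ` for all `λ, μ ∈ Λ`. -/
def IsIntegralLat {m n : ℕ} (Λ : Submodule ℤ ((Fin m → ℝ) × (Fin n → ℝ))) : Prop :=
  ∀ x ∈ Λ, ∀ y ∈ Λ, ∃ k : ℤ, lorentzForm x y = (k : ℝ)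

/-- `Λ` is self-dual with respect to the Lorentzian form. -/
def IsSelfDualLat {m n : ℕ} (Λ : Submodule ℤ ((Fin m → ℝ) × (Fin n → ℝ))) : Prop :=
  (Λ : Set ((Fin m → ℝ) × (Fin n → ℝ)))
    = {v | ∀ y ∈ Λ, ∃ k : ℤ, lorentzForm v y = (k : ℝ)}

/-- The sublattice `Λ_1^0 = {α ∈ ℝ^m : (α,0) ∈ Λ}`. -/
def lat10 {m n : ℕ} (Λ : Submodule ℤ ((Fin m → ℝ) × (Fin n → ℝ))) :
    Submodule ℤ (Fin m → ℝ) :=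
  Λ.comap (LinearMap.inl ℤ (Fin m → ℝ) (Fin n → ℝ))

/-- The sublattice `Λ_2^0 = {β ∈ ℝ^n : (0,β) ∈ Λ}`. -/
def lat20 {m n : ℕ} (Λ : Submodule ℤ ((Fin m → ℝ) × (Fin n → ℝ))) :
    Submodule ℤ (Fin n → ℝ) :=
  Λ.comap (LinearMap.inr ℤ (Fin m → ℝ) (Fin n → ℝ))

/-- The sublattice `Λ_0 = Λ_1^0 ⊕ Λ_2^0`. -/
def lat0 {m n : ℕ} (Λ : Submodule ℤ ((Fin m → ℝ) × (Fin n → ℝ))) :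
    Submodule ℤ ((Fin m → ℝ) × (Fin n → ℝ)) :=
  (lat10 Λ).prod (lat20 Λ)

/-- The dual lattice `L^* = {x : ⟨x,y⟩ ∈ ℤ for all y ∈ L}` of a lattice `L ⊆ ℝ^d`. -/
def dualLat {d : ℕ} (L : Submodule ℤ (Fin d → ℝ)) : Submodule ℤ (Fin d → ℝ) where
  carrier := {x | ∀ y ∈ L, ∃ k : ℤ, ∑ i, x i * y i = (k : ℝ)}
  add_mem' := by
    intro a b ha hb y hy
    obtain ⟨k1, h1⟩ := ha y hy
    obtain ⟨k2, h2⟩ := hb y hy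
    refine ⟨k1 + k2, ?_⟩
    push_cast
    rw [← h1, ← h2, ← Finset.sum_add_distrib]
    exact Finset.sum_congr rfl fun i _ => by simp [add_mul]
  zero_mem' := fun y hy => ⟨0, by simp⟩
  smul_mem' := by
    intro c a ha y hy
    obtain ⟨k, h⟩ := ha y hy
    refine ⟨c * k, ?_⟩
    push_cast
    rw [← h, Finset.mul_sum]
    exact Finset.sum_congr rfl fun i _ => by simp [zsmul_eq_mul]; ring

end

open Module Submodule

theorem aux_discrete {V : Type*} [NormedAddCommGroup V] [NormedSpace ℝ V] [FiniteDimensional ℝ V]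
    (L : Submodule ℤ V) (hfree : Module.Free ℤ L) (hfg : Module.Finite ℤ L)
    (hrank : Module.finrank ℤ L = Module.finrank ℝ V)
    (hspan : Submodule.span ℝ (L : Set V) = ⊤) : DiscreteTopology L := by
  let b := Module.finBasis ℤ L
  have hL : span ℤ (Set.range fun i => (b i : V)) = L := by
    have h := congrArg (Submodule.map L.subtype) b.span_eq
    rw [Submodule.map_span, ← Set.range_comp, Submodule.map_top, Submodule.range_subtype] at h
    exact h
  have hs : ⊤ ≤ span ℝ (Set.range fun i => (b i : V)) := by
    rw [← hspan, Submodule.span_le]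
    intro x hx
    rw [← hL] at hx
    exact Submodule.span_le_restrictScalars ℤ ℝ _ hx
  have hli := linearIndependent_of_top_le_span_of_card_eq_finrank hs (by simp [hrank])
  let B := Basis.mk hli hs
  have hB : span ℤ (Set.range B) = L := by
    rw [Basis.coe_mk]; exact hL
  rw [← hB]
  infer_instance

theorem aux_rank {V : Type*} [NormedAddCommGroup V] [NormedSpace ℝ V] [FiniteDimensional ℝ V]
    (L : Submodule ℤ V) (h : DiscreteTopology L) :
    finrank ℝ (span ℝ (L : Set V)) = finrank ℤ L := by
  have := Real.finrank_eq_int_finrank_of_discrete (s := (L : Set V))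
    (by rw [Submodule.span_eq]; exact h)
  unfold Set.finrank at this
  rwa [Submodule.span_eq] at this

theorem aux_step {m : ℕ} {V : Type*} [AddCommGroup V] (Λ : Submodule ℤ V)
    [Module.Finite ℤ Λ] (f : V →ₗ[ℤ] (Fin m → ℝ)) (L : Submodule ℤ (Fin m → ℝ))
    [Module.Free ℤ L] [Module.Finite ℤ L] (hs : span ℝ (L : Set (Fin m → ℝ)) = ⊤)
    (hint : ∀ v ∈ Λ, ∀ x ∈ L, ∃ k : ℤ, ∑ i, f v i * x i = (k : ℝ)) :
    finrank ℤ Λ ≤ finrank ℤ L + finrank ℤ (LinearMap.ker (f.comp Λ.subtype)) := by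
  let b := Module.finBasis ℤ L
  let P : (Fin m → ℝ) →ₗ[ℤ] (Fin (finrank ℤ L) → ℝ) :=
    { toFun := fun w j => ∑ i, w i * (b j : Fin m → ℝ) i
      map_add' := by
        intro x y; ext j; simp [add_mul, Finset.sum_add_distrib]
      map_smul' := by
        intro c x; ext j; simp [Finset.mul_sum, mul_assoc] }
  let J : (Fin (finrank ℤ L) → ℤ) →ₗ[ℤ] (Fin (finrank ℤ L) → ℝ) :=
    { toFun := fun w j => (w j : ℝ)
      map_add' := by intro x y; ext j; simp
      map_smul' := by intro c x; ext j; simp }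
  have hP : ∀ w, P w = 0 → w = 0 := by
    intro w hw
    have h1 : ∀ x ∈ L, ∑ i, w i * x i = 0 := by
      let Q : (Fin m → ℝ) →ₗ[ℤ] ℝ :=
        { toFun := fun x => ∑ i, w i * x i
          map_add' := by intro x y; simp [mul_add, Finset.sum_add_distrib]
          map_smul' := by intro c x; simp [Finset.mul_sum, mul_left_comm] }
      have : Q.comp L.subtype = 0 := b.ext fun j => by
        have := congrFun hw j
        simpa [P, Q] using this
      intro x hx
      exact LinearMap.congr_fun this ⟨x, hx⟩
    have h2 : ∀ x ∈ span ℝ (L : Set (Fin m → ℝ)), ∑ i, w i * x i = 0 := by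
      intro x hx
      induction hx using Submodule.span_induction with
      | mem x hx => exact h1 x hx
      | zero => simp
      | add x y _ _ hx hy => simp [mul_add, Finset.sum_add_distrib, hx, hy]
      | smul c x _ hx =>
        have : ∑ i, w i * (c • x) i = c * ∑ i, w i * x i := by
          simp [Finset.mul_sum, mul_left_comm]
        rw [this, hx, mul_zero]
    have h3 := h2 w (by rw [hs]; trivial)
    rw [Finset.sum_eq_zero_iff_of_nonneg (fun i _ => mul_self_nonneg _)] at h3
    ext i
    simpa using h3 i (Finset.mem_univ _)
  let G := P.comp (f.comp Λ.subtype)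
  have hker : LinearMap.ker G = LinearMap.ker (f.comp Λ.subtype) := by
    ext v
    constructor
    · intro h; exact hP _ h
    · intro h
      change P (f.comp Λ.subtype v) = 0
      rw [LinearMap.mem_ker.1 h, map_zero]
  have hr : LinearMap.range G ≤ LinearMap.range J := by
    rintro _ ⟨v, rfl⟩
    choose k hk using fun j => hint v v.2 (b j) (b j).2
    exact ⟨k, by ext j; exact (hk j).symm⟩
  have h1 : finrank ℤ (LinearMap.range G) ≤ finrank ℤ L :=
    (Submodule.finrank_mono hr).trans ((LinearMap.finrank_range_le J).trans (by simp))
  have h2 := (LinearMap.ker G).finrank_quotient_add_finrank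
  rw [G.quotKerEquivRange.finrank_eq] at h2
  rw [hker] at h2
  omega

/-- For an even, self-dual Lorentzian lattice `Λ` of signature `(m,n)`,
the following are equivalent: (1) `Λ/Λ₀` is finite; (2) `rk Λ₀ = m+n`;
(3) `rk Λ₁⁰ = m`; (4) `rk Λ₂⁰ = n`. -/
theorem llcft_rationality_tfae {m n : ℕ}
    (Λ : Submodule ℤ ((Fin m → ℝ) × (Fin n → ℝ)))
    (hfree : Module.Free ℤ Λ) (hfg : Module.Finite ℤ Λ)
    (hrank : Module.finrank ℤ Λ = m + n)
    (hspan : Submodule.span ℝ (Λ : Set ((Fin m → ℝ) × (Fin n → ℝ))) = ⊤)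
    (heven : IsEvenLat Λ) (hsd : IsSelfDualLat Λ) :
    List.TFAE
      [Finite ((↥Λ) ⧸ (lat0 Λ).comap Λ.subtype),
       Module.finrank ℤ (lat0 Λ) = m + n,
       Module.finrank ℤ (lat10 Λ) = m,
       Module.finrank ℤ (lat20 Λ) = n] := by

  have hD : DiscreteTopology Λ := aux_discrete Λ hfree hfg (by simp [hrank]) hspan
  have hD1 : DiscreteTopology (lat10 Λ) :=
    DiscreteTopology.preimage_of_continuous_injective (Λ : Set ((Fin m → ℝ) × (Fin n → ℝ)))
      (f := LinearMap.inl ℤ (Fin m → ℝ) (Fin n → ℝ))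
      (by simp only [LinearMap.coe_inl]; fun_prop) LinearMap.inl_injective
  have hD2 : DiscreteTopology (lat20 Λ) :=
    DiscreteTopology.preimage_of_continuous_injective (Λ : Set ((Fin m → ℝ) × (Fin n → ℝ)))
      (f := LinearMap.inr ℤ (Fin m → ℝ) (Fin n → ℝ))
      (by simp only [LinearMap.coe_inr]; fun_prop) LinearMap.inr_injective
  have r1 := aux_rank _ hD1
  have r2 := aux_rank _ hD2
  have l1 : finrank ℤ (lat10 Λ) ≤ m := by
    rw [← r1]; exact (Submodule.finrank_le _).trans (by simp)
  have l2 : finrank ℤ (lat20 Λ) ≤ n := by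
    rw [← r2]; exact (Submodule.finrank_le _).trans (by simp)
  have f1 : Module.Finite ℤ (lat10 Λ) := inferInstance
  have f2 : Module.Finite ℤ (lat20 Λ) := inferInstance
  have fr1 : Module.Free ℤ (lat10 Λ) := inferInstance
  have fr2 : Module.Free ℤ (lat20 Λ) := inferInstance
  have hint : ∀ x ∈ Λ, ∀ y ∈ Λ, ∃ k : ℤ, lorentzForm x y = (k : ℝ) := by
    intro x hx
    have : x ∈ (Λ : Set _) := hx
    rw [hsd] at this
    exact this
  let e : lat0 Λ ≃ₗ[ℤ] lat10 Λ × lat20 Λ :=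
    { toFun := fun x => (⟨x.1.1, x.2.1⟩, ⟨x.1.2, x.2.2⟩)
      invFun := fun y => ⟨(y.1.1, y.2.1), y.1.2, y.2.2⟩
      map_add' := fun _ _ => rfl
      map_smul' := fun _ _ => rfl
      left_inv := fun _ => rfl
      right_inv := fun _ => rfl }
  have h0 : finrank ℤ (lat0 Λ) = finrank ℤ (lat10 Λ) + finrank ℤ (lat20 Λ) := by
    rw [e.finrank_eq, Module.finrank_prod]
  have h34 : finrank ℤ (lat10 Λ) = m → finrank ℤ (lat20 Λ) = n := by
    intro h
    have hs : span ℝ (lat10 Λ : Set (Fin m → ℝ)) = ⊤ :=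
      Submodule.eq_top_of_finrank_eq (by rw [r1, h]; simp)
    have := aux_step Λ (LinearMap.fst ℤ (Fin m → ℝ) (Fin n → ℝ)) (lat10 Λ) hs (by
      intro v hv x hx
      obtain ⟨k, hk⟩ := hint v hv (x, 0) hx
      exact ⟨k, by simpa [lorentzForm] using hk⟩)
    let g : LinearMap.ker ((LinearMap.fst ℤ (Fin m → ℝ) (Fin n → ℝ)).comp Λ.subtype) →ₗ[ℤ]
        lat20 Λ :=
      { toFun := fun v => ⟨v.1.1.2, by
          have h1 : v.1.1.1 = 0 := v.2
          change ((0 : Fin m → ℝ), v.1.1.2) ∈ Λ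
          rw [← h1]; exact v.1.2⟩
        map_add' := fun _ _ => rfl
        map_smul' := fun _ _ => rfl }
    have hg : Function.Injective g := by
      intro v w hvw
      have h1 : v.1.1.1 = 0 := v.2
      have h2 : w.1.1.1 = 0 := w.2
      have h3 : v.1.1.2 = w.1.1.2 := congrArg Subtype.val hvw
      exact Subtype.ext (Subtype.ext (Prod.ext (h1.trans h2.symm) h3))
    have := LinearMap.finrank_le_finrank_of_injective hg
    omega
  have h43 : finrank ℤ (lat20 Λ) = n → finrank ℤ (lat10 Λ) = m := by
    intro h
    have hs : span ℝ (lat20 Λ : Set (Fin n → ℝ)) = ⊤ :=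
      Submodule.eq_top_of_finrank_eq (by rw [r2, h]; simp)
    have := aux_step Λ (LinearMap.snd ℤ (Fin m → ℝ) (Fin n → ℝ)) (lat20 Λ) hs (by
      intro v hv x hx
      obtain ⟨k, hk⟩ := hint v hv (0, x) hx
      refine ⟨-k, ?_⟩
      push_cast
      rw [← hk]
      simp [lorentzForm])
    let g : LinearMap.ker ((LinearMap.snd ℤ (Fin m → ℝ) (Fin n → ℝ)).comp Λ.subtype) →ₗ[ℤ]
        lat10 Λ :=
      { toFun := fun v => ⟨v.1.1.1, by
          have h1 : v.1.1.2 = 0 := v.2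
          change (v.1.1.1, (0 : Fin n → ℝ)) ∈ Λ
          rw [← h1]; exact v.1.2⟩
        map_add' := fun _ _ => rfl
        map_smul' := fun _ _ => rfl }
    have hg : Function.Injective g := by
      intro v w hvw
      have h1 : v.1.1.2 = 0 := v.2
      have h2 : w.1.1.2 = 0 := w.2
      have h3 : v.1.1.1 = w.1.1.1 := congrArg Subtype.val hvw
      exact Subtype.ext (Subtype.ext (Prod.ext h3 (h1.trans h2.symm)))
    have := LinearMap.finrank_le_finrank_of_injective hg
    omega
  have hle : lat0 Λ ≤ Λ := by
    rintro ⟨x, y⟩ ⟨hx, hy⟩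
    have h1 : (x, (0 : Fin n → ℝ)) ∈ Λ := hx
    have h2 : ((0 : Fin m → ℝ), y) ∈ Λ := hy
    simpa using Λ.add_mem h1 h2
  have h12 : Finite ((↥Λ) ⧸ (lat0 Λ).comap Λ.subtype) ↔ finrank ℤ (lat0 Λ) = m + n := by
    rw [Submodule.finiteQuotient_iff, (Submodule.comapSubtypeEquivOfLe hle).finrank_eq, hrank]
  tfae_have 1 ↔ 2 := h12
  tfae_have 2 → 3 := by intro h; omega
  tfae_have 3 → 4 := h34
  tfae_have 4 → 2 := by intro h; have := h43 h; omega
  tfae_finish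
end

section
/- Let Λ be an even, self-dual Lorentzian lattice of signature (m,n) such that the quotient group Λ/Λ_0 is finite. Then the cardinalities |Λ/Λ_0|, |(Λ_1^0)^*/Λ_1^0| and |(Λ_2^0)^*/Λ_2^0| are all equal, and the homomorphisms φ₁ : Λ/Λ_0 → (Λ_1^0)^*/Λ_1^0, [(α,β)] ↦ [α], and φ₂ : Λ/Λ_0 → (Λ_2^0)^*/Λ_2^0, [(α,β)] ↦ [β], are group isomorphisms. -/
open Finset

theorem llcft_ext {m n : ℕ}
    (Λ : Submodule ℤ ((Fin m → ℝ) × (Fin n → ℝ)))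
    (hfree : Module.Free ℤ Λ) (hfg : Module.Finite ℤ Λ)
    (hrank : Module.finrank ℤ Λ = m + n)
    (hspan : Submodule.span ℝ (Λ : Set ((Fin m → ℝ) × (Fin n → ℝ))) = ⊤)
    (g : Λ →ₗ[ℤ] ℝ) :
    ∃ v : (Fin m → ℝ) × (Fin n → ℝ), ∀ y : Λ, lorentzForm v y = g y := by
  classical
  let b := Module.finBasis ℤ Λ
  let c : Fin (Module.finrank ℤ Λ) → (Fin m → ℝ) × (Fin n → ℝ) := fun i => (b i : _)
  have hcs : ⊤ ≤ Submodule.span ℝ (Set.range c) := by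
    rw [← hspan, Submodule.span_le]
    intro y hy
    have h := b.sum_repr ⟨y, hy⟩
    have h2 : y = ∑ i, (b.repr ⟨y, hy⟩ i) • c i := by
      have := congrArg Subtype.val h
      refine this.symm.trans ?_
      simp only [AddSubmonoidClass.coe_finset_sum, Submodule.coe_smul, c]
    rw [h2]
    refine Submodule.sum_mem _ fun i _ => ?_
    rw [← Int.cast_smul_eq_zsmul ℝ]
    exact Submodule.smul_mem _ _ (Submodule.subset_span ⟨i, rfl⟩)
  have hli : LinearIndependent ℝ c :=
    linearIndependent_of_top_le_span_of_card_eq_finrank hcs (by simp [hrank])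
  let B := Module.Basis.mk hli hcs
  let F : ((Fin m → ℝ) × (Fin n → ℝ)) →ₗ[ℝ] ℝ := B.constr ℝ (fun i => g (b i))
  have hF : ∀ y : Λ, F y = g y := by
    have : (F.restrictScalars ℤ).comp Λ.subtype = g := by
      apply b.ext
      intro i
      have h1 : ((b i : Λ) : (Fin m → ℝ) × (Fin n → ℝ)) = B i := by simp [B, c]
      simp only [LinearMap.comp_apply, Submodule.subtype_apply, LinearMap.restrictScalars_apply]
      rw [h1]
      simp [F, Module.Basis.constr_basis]
    intro y
    exact LinearMap.congr_fun this y
  refine ⟨(fun i => F (Pi.single i 1, 0), fun j => - F (0, Pi.single j 1)), fun y => ?_⟩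
  rw [← hF y]
  obtain ⟨y, hy⟩ := y
  have hy2 : y = (∑ i, y.1 i • ((Pi.single i 1, 0) : (Fin m → ℝ) × (Fin n → ℝ)))
      + ∑ j, y.2 j • ((0, Pi.single j 1) : (Fin m → ℝ) × (Fin n → ℝ)) := by
    ext k
    · simp [Prod.fst_sum, Finset.sum_apply, Pi.single_apply]
    · simp [Prod.snd_sum, Finset.sum_apply, Pi.single_apply]
  have hFy : F y = _ := congrArg F hy2
  change lorentzForm _ y = F y
  rw [hFy]
  simp only [lorentzForm, map_add, map_sum, map_smul, smul_eq_mul, mul_comm, mul_neg,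
    Finset.sum_neg_distrib, sub_neg_eq_add]

theorem llcft_mul_mem {m n : ℕ}
    (Λ : Submodule ℤ ((Fin m → ℝ) × (Fin n → ℝ)))
    (hfin : Finite ((↥Λ) ⧸ (lat0 Λ).comap Λ.subtype)) :
    ∃ N : ℕ, N ≠ 0 ∧ ∀ y ∈ Λ, N • y ∈ lat0 Λ := by
  refine ⟨Nat.card ((↥Λ) ⧸ (lat0 Λ).comap Λ.subtype), Nat.card_pos.ne', fun y hy => ?_⟩
  have h : Nat.card ((↥Λ) ⧸ (lat0 Λ).comap Λ.subtype) •
      (Submodule.Quotient.mk (p := (lat0 Λ).comap Λ.subtype) (⟨y, hy⟩ : Λ)) = 0 :=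
    card_nsmul_eq_zero'
  rw [← Submodule.Quotient.mk_smul, Submodule.Quotient.mk_eq_zero] at h
  simpa using h

theorem llcft_surj1 {m n : ℕ}
    (Λ : Submodule ℤ ((Fin m → ℝ) × (Fin n → ℝ)))
    (hfree : Module.Free ℤ Λ) (hfg : Module.Finite ℤ Λ)
    (hrank : Module.finrank ℤ Λ = m + n)
    (hspan : Submodule.span ℝ (Λ : Set ((Fin m → ℝ) × (Fin n → ℝ))) = ⊤)
    (hsd : IsSelfDualLat Λ)
    (hfin : Finite ((↥Λ) ⧸ (lat0 Λ).comap Λ.subtype))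
    (x : Fin m → ℝ) (hx : x ∈ dualLat (lat10 Λ)) : ∃ v ∈ Λ, v.1 = x := by
  classical
  let π : Λ →ₗ[ℤ] (Fin n → ℝ) := (LinearMap.snd ℤ (Fin m → ℝ) (Fin n → ℝ)).comp Λ.subtype
  have : Module.Finite ℤ (LinearMap.range π) := Module.Finite.range π
  have : Module.Free ℤ (LinearMap.range π) := Module.free_of_finite_type_torsion_free'
  obtain ⟨s, hs⟩ := Module.projective_lifting_property π.rangeRestrict LinearMap.id
    π.surjective_rangeRestrict
  let D : (Fin m → ℝ) →ₗ[ℤ] ℝ :=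
    ((dotProductBilin ℝ ℝ) x).restrictScalars ℤ
  have hD : ∀ a, D a = ∑ i, x i * a i := fun a => rfl
  let P : Λ →ₗ[ℤ] Λ := LinearMap.id - s.comp π.rangeRestrict
  have hP : ∀ y : Λ, ((P y : Λ) : (Fin m → ℝ) × (Fin n → ℝ)).1 ∈ lat10 Λ := by
    intro y
    have h0 : ((P y : Λ) : (Fin m → ℝ) × (Fin n → ℝ)).2 = 0 := by
      have h1 : π (P y) = 0 := by
        have h2 := LinearMap.congr_fun hs (π.rangeRestrict y)
        have h3 := congrArg Subtype.val h2
        change π (s (π.rangeRestrict y)) = π y at h3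
        simp only [P, LinearMap.sub_apply, LinearMap.id_apply, LinearMap.comp_apply, map_sub]
        rw [h3, sub_self]
      exact h1
    change (((P y : Λ) : (Fin m → ℝ) × (Fin n → ℝ)).1, (0 : Fin n → ℝ)) ∈ Λ
    rw [← h0]
    exact (P y).2
  have hP0 : ∀ y : Λ, (y : (Fin m → ℝ) × (Fin n → ℝ)).2 = 0 → P y = y := by
    intro y hy
    have : π.rangeRestrict y = 0 := Subtype.ext hy
    simp [P, this]
  obtain ⟨v, hv⟩ := llcft_ext Λ hfree hfg hrank hspan
    (D.comp ((LinearMap.fst ℤ (Fin m → ℝ) (Fin n → ℝ)).comp (Λ.subtype.comp P)))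
  have hv' : ∀ y : Λ, lorentzForm v y = ∑ i, x i * ((P y : Λ) : (Fin m → ℝ) × (Fin n → ℝ)).1 i :=
    fun y => hv y
  have hvΛ : v ∈ Λ := by
    have : v ∈ (Λ : Set ((Fin m → ℝ) × (Fin n → ℝ))) := by
      rw [hsd]
      intro y hy
      obtain ⟨k, hk⟩ := hx _ (hP ⟨y, hy⟩)
      exact ⟨k, by rw [← hk]; exact hv' ⟨y, hy⟩⟩
    exact this
  have horth : ∀ a ∈ lat10 Λ, ∑ i, (v.1 - x) i * a i = 0 := by
    intro a ha
    have h := hv' ⟨(a, 0), ha⟩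
    rw [hP0 _ rfl] at h
    simp only [lorentzForm, Pi.zero_apply, mul_zero, Finset.sum_const_zero, sub_zero, zero_sub] at h
    simp only [Pi.sub_apply, Pi.add_apply, sub_mul, add_mul, Finset.sum_sub_distrib, Finset.sum_add_distrib]
    linarith
  obtain ⟨N, hN, hNm⟩ := llcft_mul_mem Λ hfin
  have horth2 : ∀ y ∈ Λ, ∑ i, (v.1 - x) i * y.1 i = 0 := by
    intro y hy
    have h := horth _ (hNm y hy).1
    have h3 : (N : ℝ) * ∑ i, (v.1 - x) i * y.1 i = 0 := by
      rw [← h, Finset.mul_sum]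
      refine Finset.sum_congr rfl fun i _ => ?_
      rw [Prod.smul_fst, Pi.smul_apply, nsmul_eq_mul]
      ring
    exact (mul_eq_zero.mp h3).resolve_left (by exact_mod_cast hN)
  have horth3 : ∀ y : (Fin m → ℝ) × (Fin n → ℝ), ∑ i, (v.1 - x) i * y.1 i = 0 := by
    intro y
    let G : ((Fin m → ℝ) × (Fin n → ℝ)) →ₗ[ℝ] ℝ :=
      ((dotProductBilin ℝ ℝ) (v.1 - x)).comp (LinearMap.fst ℝ (Fin m → ℝ) (Fin n → ℝ))
    have hG : Submodule.span ℝ (Λ : Set ((Fin m → ℝ) × (Fin n → ℝ))) ≤ LinearMap.ker G :=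
      Submodule.span_le.mpr fun z hz => horth2 z hz
    rw [hspan] at hG
    exact hG (Submodule.mem_top (x := y))
  have hz : (v.1 - x) = 0 := dotProduct_self_eq_zero.mp (horth3 (v.1 - x, 0))
  exact ⟨v, hvΛ, sub_eq_zero.mp hz⟩

theorem llcft_iso1 {m n : ℕ}
    (Λ : Submodule ℤ ((Fin m → ℝ) × (Fin n → ℝ)))
    (hfree : Module.Free ℤ Λ) (hfg : Module.Finite ℤ Λ)
    (hrank : Module.finrank ℤ Λ = m + n)
    (hspan : Submodule.span ℝ (Λ : Set ((Fin m → ℝ) × (Fin n → ℝ))) = ⊤)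
    (hsd : IsSelfDualLat Λ)
    (hfin : Finite ((↥Λ) ⧸ (lat0 Λ).comap Λ.subtype)) :
    ∃ φ : ((↥Λ) ⧸ (lat0 Λ).comap Λ.subtype) ≃+
        ((↥(dualLat (lat10 Λ))) ⧸ (lat10 Λ).comap (dualLat (lat10 Λ)).subtype),
      ∀ (x : (Fin m → ℝ) × (Fin n → ℝ)) (hx : x ∈ Λ) (h1 : x.1 ∈ dualLat (lat10 Λ)),
        φ (Submodule.Quotient.mk (⟨x, hx⟩ : ↥Λ))
          = Submodule.Quotient.mk (⟨x.1, h1⟩ : ↥(dualLat (lat10 Λ))) := by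
  have hd : ∀ y : Λ, (y : (Fin m → ℝ) × (Fin n → ℝ)).1 ∈ dualLat (lat10 Λ) := by
    rintro ⟨y, hy⟩ a ha
    have hy' : y ∈ (Λ : Set ((Fin m → ℝ) × (Fin n → ℝ))) := hy
    rw [hsd] at hy'
    obtain ⟨k, hk⟩ := hy' _ ha
    refine ⟨k, ?_⟩
    simp [lorentzForm] at hk
    simp [← hk]
  let f : Λ →ₗ[ℤ] dualLat (lat10 Λ) :=
    LinearMap.codRestrict _ ((LinearMap.fst ℤ (Fin m → ℝ) (Fin n → ℝ)).comp Λ.subtype) hd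
  have hle : (lat0 Λ).comap Λ.subtype ≤ ((lat10 Λ).comap (dualLat (lat10 Λ)).subtype).comap f :=
    fun y hy => hy.1
  let φ := Submodule.mapQ _ _ f hle
  have hinj : Function.Injective φ := by
    rw [injective_iff_map_eq_zero]
    intro q hq
    obtain ⟨⟨y, hy⟩, rfl⟩ := Submodule.Quotient.mk_surjective _ q
    have h1 : Submodule.Quotient.mk (p := (lat10 Λ).comap (dualLat (lat10 Λ)).subtype)
      (f ⟨y, hy⟩) = 0 := hq
    rw [Submodule.Quotient.mk_eq_zero] at h1 ⊢
    have h2 : y.1 ∈ lat10 Λ := h1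
    have h4 : (y.1, (0 : Fin n → ℝ)) ∈ Λ := h2
    have h3 : y.2 ∈ lat20 Λ := by
      change ((0 : Fin m → ℝ), y.2) ∈ Λ
      have h5 := Λ.sub_mem hy h4
      have h6 : y - (y.1, (0 : Fin n → ℝ)) = ((0 : Fin m → ℝ), y.2) := by ext <;> simp
      rwa [h6] at h5
    exact ⟨h2, h3⟩
  have hsurj : Function.Surjective φ := by
    intro q
    obtain ⟨⟨x, hx⟩, rfl⟩ := Submodule.Quotient.mk_surjective _ q
    obtain ⟨v, hv, rfl⟩ := llcft_surj1 Λ hfree hfg hrank hspan hsd hfin x hx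
    exact ⟨Submodule.Quotient.mk ⟨v, hv⟩, rfl⟩
  exact ⟨(LinearEquiv.ofBijective φ ⟨hinj, hsurj⟩).toAddEquiv, fun x hx h1 => rfl⟩

theorem llcft_surj2 {m n : ℕ}
    (Λ : Submodule ℤ ((Fin m → ℝ) × (Fin n → ℝ)))
    (hfree : Module.Free ℤ Λ) (hfg : Module.Finite ℤ Λ)
    (hrank : Module.finrank ℤ Λ = m + n)
    (hspan : Submodule.span ℝ (Λ : Set ((Fin m → ℝ) × (Fin n → ℝ))) = ⊤)
    (hsd : IsSelfDualLat Λ)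
    (hfin : Finite ((↥Λ) ⧸ (lat0 Λ).comap Λ.subtype))
    (x : Fin n → ℝ) (hx : x ∈ dualLat (lat20 Λ)) : ∃ v ∈ Λ, v.2 = x := by
  classical
  let π : Λ →ₗ[ℤ] (Fin m → ℝ) := (LinearMap.fst ℤ (Fin m → ℝ) (Fin n → ℝ)).comp Λ.subtype
  have : Module.Finite ℤ (LinearMap.range π) := Module.Finite.range π
  have : Module.Free ℤ (LinearMap.range π) := Module.free_of_finite_type_torsion_free'
  obtain ⟨s, hs⟩ := Module.projective_lifting_property π.rangeRestrict LinearMap.id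
    π.surjective_rangeRestrict
  let D : (Fin n → ℝ) →ₗ[ℤ] ℝ :=
    ((dotProductBilin ℝ ℝ) x).restrictScalars ℤ
  have hD : ∀ a, D a = ∑ i, x i * a i := fun a => rfl
  let P : Λ →ₗ[ℤ] Λ := LinearMap.id - s.comp π.rangeRestrict
  have hP : ∀ y : Λ, ((P y : Λ) : (Fin m → ℝ) × (Fin n → ℝ)).2 ∈ lat20 Λ := by
    intro y
    have h0 : ((P y : Λ) : (Fin m → ℝ) × (Fin n → ℝ)).1 = 0 := by
      have h1 : π (P y) = 0 := by
        have h2 := LinearMap.congr_fun hs (π.rangeRestrict y)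
        have h3 := congrArg Subtype.val h2
        change π (s (π.rangeRestrict y)) = π y at h3
        simp only [P, LinearMap.sub_apply, LinearMap.id_apply, LinearMap.comp_apply, map_sub]
        rw [h3, sub_self]
      exact h1
    change ((0 : Fin m → ℝ), ((P y : Λ) : (Fin m → ℝ) × (Fin n → ℝ)).2) ∈ Λ
    rw [← h0]
    exact (P y).2
  have hP0 : ∀ y : Λ, (y : (Fin m → ℝ) × (Fin n → ℝ)).1 = 0 → P y = y := by
    intro y hy
    have : π.rangeRestrict y = 0 := Subtype.ext hy
    simp [P, this]
  obtain ⟨v, hv⟩ := llcft_ext Λ hfree hfg hrank hspan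
    (D.comp ((LinearMap.snd ℤ (Fin m → ℝ) (Fin n → ℝ)).comp (Λ.subtype.comp P)))
  have hv' : ∀ y : Λ, lorentzForm v y = ∑ i, x i * ((P y : Λ) : (Fin m → ℝ) × (Fin n → ℝ)).2 i :=
    fun y => hv y
  have hvΛ : v ∈ Λ := by
    have : v ∈ (Λ : Set ((Fin m → ℝ) × (Fin n → ℝ))) := by
      rw [hsd]
      intro y hy
      obtain ⟨k, hk⟩ := hx _ (hP ⟨y, hy⟩)
      exact ⟨k, by rw [← hk]; exact hv' ⟨y, hy⟩⟩
    exact this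
  have horth : ∀ a ∈ lat20 Λ, ∑ i, (v.2 + x) i * a i = 0 := by
    intro a ha
    have h := hv' ⟨(0, a), ha⟩
    rw [hP0 _ rfl] at h
    simp only [lorentzForm, Pi.zero_apply, mul_zero, Finset.sum_const_zero, sub_zero, zero_sub] at h
    simp only [Pi.sub_apply, Pi.add_apply, sub_mul, add_mul, Finset.sum_sub_distrib, Finset.sum_add_distrib]
    linarith
  obtain ⟨N, hN, hNm⟩ := llcft_mul_mem Λ hfin
  have horth2 : ∀ y ∈ Λ, ∑ i, (v.2 + x) i * y.2 i = 0 := by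
    intro y hy
    have h := horth _ (hNm y hy).2
    have h3 : (N : ℝ) * ∑ i, (v.2 + x) i * y.2 i = 0 := by
      rw [← h, Finset.mul_sum]
      refine Finset.sum_congr rfl fun i _ => ?_
      rw [Prod.smul_snd, Pi.smul_apply, nsmul_eq_mul]
      ring
    exact (mul_eq_zero.mp h3).resolve_left (by exact_mod_cast hN)
  have horth3 : ∀ y : (Fin m → ℝ) × (Fin n → ℝ), ∑ i, (v.2 + x) i * y.2 i = 0 := by
    intro y
    let G : ((Fin m → ℝ) × (Fin n → ℝ)) →ₗ[ℝ] ℝ :=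
      ((dotProductBilin ℝ ℝ) (v.2 + x)).comp (LinearMap.snd ℝ (Fin m → ℝ) (Fin n → ℝ))
    have hG : Submodule.span ℝ (Λ : Set ((Fin m → ℝ) × (Fin n → ℝ))) ≤ LinearMap.ker G :=
      Submodule.span_le.mpr fun z hz => horth2 z hz
    rw [hspan] at hG
    exact hG (Submodule.mem_top (x := y))
  have hz : (v.2 + x) = 0 := dotProduct_self_eq_zero.mp (horth3 (0, v.2 + x))
  exact ⟨-v, Λ.neg_mem hvΛ, by rw [Prod.snd_neg, eq_neg_of_add_eq_zero_left hz, neg_neg]⟩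

theorem llcft_iso2 {m n : ℕ}
    (Λ : Submodule ℤ ((Fin m → ℝ) × (Fin n → ℝ)))
    (hfree : Module.Free ℤ Λ) (hfg : Module.Finite ℤ Λ)
    (hrank : Module.finrank ℤ Λ = m + n)
    (hspan : Submodule.span ℝ (Λ : Set ((Fin m → ℝ) × (Fin n → ℝ))) = ⊤)
    (hsd : IsSelfDualLat Λ)
    (hfin : Finite ((↥Λ) ⧸ (lat0 Λ).comap Λ.subtype)) :
    ∃ φ : ((↥Λ) ⧸ (lat0 Λ).comap Λ.subtype) ≃+
        ((↥(dualLat (lat20 Λ))) ⧸ (lat20 Λ).comap (dualLat (lat20 Λ)).subtype),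
      ∀ (x : (Fin m → ℝ) × (Fin n → ℝ)) (hx : x ∈ Λ) (h1 : x.2 ∈ dualLat (lat20 Λ)),
        φ (Submodule.Quotient.mk (⟨x, hx⟩ : ↥Λ))
          = Submodule.Quotient.mk (⟨x.2, h1⟩ : ↥(dualLat (lat20 Λ))) := by
  have hd : ∀ y : Λ, (y : (Fin m → ℝ) × (Fin n → ℝ)).2 ∈ dualLat (lat20 Λ) := by
    rintro ⟨y, hy⟩ a ha
    have hy' : y ∈ (Λ : Set ((Fin m → ℝ) × (Fin n → ℝ))) := hy
    rw [hsd] at hy'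
    obtain ⟨k, hk⟩ := hy' _ ha
    refine ⟨-k, ?_⟩
    simp [lorentzForm] at hk
    simp [← hk]
  let f : Λ →ₗ[ℤ] dualLat (lat20 Λ) :=
    LinearMap.codRestrict _ ((LinearMap.snd ℤ (Fin m → ℝ) (Fin n → ℝ)).comp Λ.subtype) hd
  have hle : (lat0 Λ).comap Λ.subtype ≤ ((lat20 Λ).comap (dualLat (lat20 Λ)).subtype).comap f :=
    fun y hy => hy.2
  let φ := Submodule.mapQ _ _ f hle
  have hinj : Function.Injective φ := by
    rw [injective_iff_map_eq_zero]
    intro q hq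
    obtain ⟨⟨y, hy⟩, rfl⟩ := Submodule.Quotient.mk_surjective _ q
    have h1 : Submodule.Quotient.mk (p := (lat20 Λ).comap (dualLat (lat20 Λ)).subtype)
      (f ⟨y, hy⟩) = 0 := hq
    rw [Submodule.Quotient.mk_eq_zero] at h1 ⊢
    have h2 : y.2 ∈ lat20 Λ := h1
    have h4 : ((0 : Fin m → ℝ), y.2) ∈ Λ := h2
    have h3 : y.1 ∈ lat10 Λ := by
      change (y.1, (0 : Fin n → ℝ)) ∈ Λ
      have h5 := Λ.sub_mem hy h4
      have h6 : y - ((0 : Fin m → ℝ), y.2) = (y.1, (0 : Fin n → ℝ)) := by ext <;> simp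
      rwa [h6] at h5
    exact ⟨h3, h2⟩
  have hsurj : Function.Surjective φ := by
    intro q
    obtain ⟨⟨x, hx⟩, rfl⟩ := Submodule.Quotient.mk_surjective _ q
    obtain ⟨v, hv, rfl⟩ := llcft_surj2 Λ hfree hfg hrank hspan hsd hfin x hx
    exact ⟨Submodule.Quotient.mk ⟨v, hv⟩, rfl⟩
  exact ⟨(LinearEquiv.ofBijective φ ⟨hinj, hsurj⟩).toAddEquiv, fun x hx h1 => rfl⟩

/-- For an even, self-dual Lorentzian lattice `Λ` of signature `(m,n)` with
`Λ/Λ₀` finite, the cardinalities `|Λ/Λ₀|`, `|(Λ₁⁰)^*/Λ₁⁰|`, `|(Λ₂⁰)^*/Λ₂⁰|` coincide, and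
`φ₁ : [(α,β)] ↦ [α]` and `φ₂ : [(α,β)] ↦ [β]` are group isomorphisms. -/
theorem llcft_phi_one_phi_two_isomorphism {m n : ℕ}
    (Λ : Submodule ℤ ((Fin m → ℝ) × (Fin n → ℝ)))
    (hfree : Module.Free ℤ Λ) (hfg : Module.Finite ℤ Λ)
    (hrank : Module.finrank ℤ Λ = m + n)
    (hspan : Submodule.span ℝ (Λ : Set ((Fin m → ℝ) × (Fin n → ℝ))) = ⊤)
    (heven : IsEvenLat Λ) (hsd : IsSelfDualLat Λ)
    (hfin : Finite ((↥Λ) ⧸ (lat0 Λ).comap Λ.subtype)) :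
    (Nat.card ((↥Λ) ⧸ (lat0 Λ).comap Λ.subtype)
        = Nat.card ((↥(dualLat (lat10 Λ))) ⧸ (lat10 Λ).comap (dualLat (lat10 Λ)).subtype) ∧
      Nat.card ((↥Λ) ⧸ (lat0 Λ).comap Λ.subtype)
        = Nat.card ((↥(dualLat (lat20 Λ))) ⧸ (lat20 Λ).comap (dualLat (lat20 Λ)).subtype)) ∧
    (∃ φ₁ : ((↥Λ) ⧸ (lat0 Λ).comap Λ.subtype) ≃+
        ((↥(dualLat (lat10 Λ))) ⧸ (lat10 Λ).comap (dualLat (lat10 Λ)).subtype),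
      ∀ (x : (Fin m → ℝ) × (Fin n → ℝ)) (hx : x ∈ Λ) (h1 : x.1 ∈ dualLat (lat10 Λ)),
        φ₁ (Submodule.Quotient.mk (⟨x, hx⟩ : ↥Λ))
          = Submodule.Quotient.mk (⟨x.1, h1⟩ : ↥(dualLat (lat10 Λ)))) ∧
    (∃ φ₂ : ((↥Λ) ⧸ (lat0 Λ).comap Λ.subtype) ≃+
        ((↥(dualLat (lat20 Λ))) ⧸ (lat20 Λ).comap (dualLat (lat20 Λ)).subtype),
      ∀ (x : (Fin m → ℝ) × (Fin n → ℝ)) (hx : x ∈ Λ) (h2 : x.2 ∈ dualLat (lat20 Λ)),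
        φ₂ (Submodule.Quotient.mk (⟨x, hx⟩ : ↥Λ))
          = Submodule.Quotient.mk (⟨x.2, h2⟩ : ↥(dualLat (lat20 Λ)))) := by
  obtain ⟨e1, he1⟩ := llcft_iso1 Λ hfree hfg hrank hspan hsd hfin
  obtain ⟨e2, he2⟩ := llcft_iso2 Λ hfree hfg hrank hspan hsd hfin
  exact ⟨⟨Nat.card_congr e1.toEquiv, Nat.card_congr e2.toEquiv⟩, ⟨e1, he1⟩, ⟨e2, he2⟩⟩
end

section
/- Let Λ be an even, self-dual Lorentzian lattice of signature (m,n). Then the ℤ-module Λ_1^0 has rank m if and only if the ℤ-module Λ_2^0 has rank n. -/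
open Finset

lemma aux_finrank {d : ℕ} (L : Submodule ℤ (Fin d → ℝ)) [DiscreteTopology L] :
    Module.finrank ℝ (Submodule.span ℝ (L : Set (Fin d → ℝ))) = Module.finrank ℤ L := by
  have h := Real.finrank_eq_int_finrank_of_discrete (s := (L : Set (Fin d → ℝ)))
    (by rw [Submodule.span_eq]; infer_instance)
  unfold Set.finrank at h
  rwa [Submodule.span_eq] at h

lemma aux_finite {d : ℕ} (L : Submodule ℤ (Fin d → ℝ)) [DiscreteTopology L] :
    Module.Finite ℤ L := inferInstance

lemma aux_free {d : ℕ} (L : Submodule ℤ (Fin d → ℝ)) [DiscreteTopology L] :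
    Module.Free ℤ L := inferInstance

lemma aux_key {m n : ℕ} {V : Type*} [NormedAddCommGroup V] [NormedSpace ℝ V]
    (Λ : Submodule ℤ V) [DiscreteTopology Λ] [Module.Finite ℤ Λ]
    (hrank : Module.finrank ℤ Λ = m + n)
    (i : (Fin m → ℝ) →ₗ[ℤ] V) (j : (Fin n → ℝ) →ₗ[ℤ] V) (p : V →ₗ[ℤ] (Fin m → ℝ))
    (hi : Function.Injective i) (hj : Function.Injective j)
    (hic : Continuous i) (hjc : Continuous j)
    (hp : ∀ x, p x = 0 → ∃ b, j b = x)
    (hint : ∀ x ∈ Λ, ∀ a, i a ∈ Λ → ∃ k : ℤ, p x ⬝ᵥ a = k)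
    (h : Module.finrank ℤ (Λ.comap i) = m) : Module.finrank ℤ (Λ.comap j) = n := by
  have d1 : DiscreteTopology (Λ.comap i) :=
    DiscreteTopology.preimage_of_continuous_injective (Λ : Set V) hic hi
  have d2 : DiscreteTopology (Λ.comap j) :=
    DiscreteTopology.preimage_of_continuous_injective (Λ : Set V) hjc hj
  have f1 := aux_free (Λ.comap i)
  have g1 := aux_finite (Λ.comap i)
  have g2 := aux_finite (Λ.comap j)
  have hle : Module.finrank ℤ (Λ.comap j) ≤ n := by
    rw [← aux_finrank]
    exact (Submodule.finrank_le _).trans (by simp)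
  have htop : Submodule.span ℝ ((Λ.comap i : Submodule ℤ _) : Set (Fin m → ℝ)) = ⊤ := by
    apply Submodule.eq_top_of_finrank_eq
    rw [aux_finrank, h]; simp
  let a := Module.finBasisOfFinrankEq ℤ (Λ.comap i) h
  let g : Λ →ₗ[ℤ] (Fin m → ℝ) :=
    { toFun := fun x k => p x ⬝ᵥ (a k : Fin m → ℝ)
      map_add' := by intro x y; ext k; simp [add_dotProduct]
      map_smul' := by intro c x; ext k; simp only [Submodule.coe_smul, map_smul, smul_dotProduct]; rfl }
  have hr : LinearMap.range g ≤ Submodule.span ℤ (Set.range (Pi.basisFun ℝ (Fin m))) := by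
    rintro _ ⟨x, rfl⟩
    rw [Module.Basis.mem_span_iff_repr_mem]
    intro k
    obtain ⟨z, hz⟩ := hint x x.2 (a k) (a k).2
    exact ⟨z, by simp [g, hz]⟩
  have hr' : Module.finrank ℤ (LinearMap.range g) ≤ m := by
    refine (Submodule.finrank_mono hr).trans ?_
    simpa [Set.finrank] using
      finrank_range_le_card (R := ℤ) (fun k => Pi.basisFun ℝ (Fin m) k)
  have hker : ∀ x ∈ LinearMap.ker g, p x = 0 := by
    intro x hx
    have h0 : ∀ k, p x ⬝ᵥ (a k : Fin m → ℝ) = 0 := fun k => congrFun hx k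
    have h1 : ∀ b : Λ.comap i, p x ⬝ᵥ (b : Fin m → ℝ) = 0 := by
      intro b
      rw [← a.sum_repr b]
      rw [AddSubmonoidClass.coe_finsetSum, dotProduct_sum]
      refine Finset.sum_eq_zero fun k _ => ?_
      rw [Submodule.coe_smul, dotProduct_smul, h0, smul_zero]
    have h2 : ∀ v : Fin m → ℝ, p x ⬝ᵥ v = 0 := by
      intro v
      have hv : v ∈ Submodule.span ℝ ((Λ.comap i : Submodule ℤ _) : Set (Fin m → ℝ)) := by
        rw [htop]; trivial
      induction hv using Submodule.span_induction with
      | mem v hv => exact h1 ⟨v, hv⟩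
      | zero => simp
      | add u v _ _ hu hv => simp [dotProduct_add, hu, hv]
      | smul c v _ hv => simp [hv]
    exact dotProduct_self_eq_zero.1 (h2 _)
  have hrn := Submodule.finrank_quotient_add_finrank (LinearMap.ker g)
  rw [g.quotKerEquivRange.finrank_eq] at hrn
  let e : Λ.comap j →ₗ[ℤ] Λ := j.restrict (fun x hx => hx)
  have he : Function.Injective e := fun x y hxy =>
    Subtype.ext (hj (congrArg Subtype.val hxy))
  have hke : LinearMap.ker g ≤ LinearMap.range e := by
    intro x hx
    obtain ⟨b, hb⟩ := hp x (hker x hx)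
    exact ⟨⟨b, by simp [hb]⟩, Subtype.ext hb⟩
  have := Submodule.finrank_mono hke
  rw [LinearMap.finrank_range_of_inj he] at this
  omega

/-- For an even, self-dual Lorentzian lattice `Λ` of signature `(m,n)`,
the sublattice `Λ₁⁰` has rank `m` iff `Λ₂⁰` has rank `n`. -/
theorem lat10_fullrank_iff_lat20_fullrank {m n : ℕ}
    (Λ : Submodule ℤ ((Fin m → ℝ) × (Fin n → ℝ)))
    (hfree : Module.Free ℤ Λ) (hfg : Module.Finite ℤ Λ)
    (hrank : Module.finrank ℤ Λ = m + n)
    (hspan : Submodule.span ℝ (Λ : Set ((Fin m → ℝ) × (Fin n → ℝ))) = ⊤)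
    (heven : IsEvenLat Λ) (hsd : IsSelfDualLat Λ) :
    Module.finrank ℤ (lat10 Λ) = m ↔ Module.finrank ℤ (lat20 Λ) = n := by
  have hint : IsIntegralLat Λ := fun x hx y hy => by
    have hx' : x ∈ (Λ : Set ((Fin m → ℝ) × (Fin n → ℝ))) := hx
    rw [hsd] at hx'
    exact hx' y hy
  have hdisc : DiscreteTopology Λ := by
    let b := Module.finBasisOfFinrankEq ℤ Λ hrank
    let v : Fin (m + n) → (Fin m → ℝ) × (Fin n → ℝ) := fun k => b k
    have hv : Submodule.span ℤ (Set.range v) = Λ := by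
      have h1 := congrArg (Submodule.map Λ.subtype) b.span_eq
      rw [Submodule.map_span, ← Set.range_comp, Submodule.map_top, Submodule.range_subtype] at h1
      exact h1
    have hv2 : ⊤ ≤ Submodule.span ℝ (Set.range v) := by
      rw [← hspan, Submodule.span_le]
      nth_rewrite 1 [← hv]
      exact Submodule.span_le_restrictScalars ℤ ℝ _
    have hli : LinearIndependent ℝ v :=
      linearIndependent_of_top_le_span_of_card_eq_finrank hv2 (by simp)
    have : DiscreteTopology (Submodule.span ℤ (Set.range (Module.Basis.mk hli hv2))) :=
      inferInstance
    rw [Module.Basis.coe_mk, hv] at this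
    exact this
  constructor
  · refine aux_key Λ hrank (LinearMap.inl ℤ _ _) (LinearMap.inr ℤ _ _) (LinearMap.fst ℤ _ _)
      LinearMap.inl_injective LinearMap.inr_injective (by simp [continuous_id', continuous_const, Continuous.prodMk_right])
      (by simp [continuous_id', continuous_const, Continuous.prodMk_right]) ?_ ?_
    · rintro ⟨x, y⟩ hx
      exact ⟨y, by simpa using hx.symm⟩
    · intro x hx a ha
      obtain ⟨k, hk⟩ := hint x hx _ ha
      exact ⟨k, by simpa [lorentzForm, dotProduct] using hk⟩
  · refine aux_key Λ (by omega) (LinearMap.inr ℤ _ _) (LinearMap.inl ℤ _ _) (LinearMap.snd ℤ _ _)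
      LinearMap.inr_injective LinearMap.inl_injective (by simp [continuous_id', continuous_const, Continuous.prodMk_right])
      (by simp [continuous_id', continuous_const, Continuous.prodMk_right]) ?_ ?_
    · rintro ⟨x, y⟩ hx
      exact ⟨x, by simpa using hx.symm⟩
    · intro x hx a ha
      obtain ⟨k, hk⟩ := hint x hx _ ha
      refine ⟨-k, ?_⟩
      push_cast
      rw [← hk]
      simp [lorentzForm, dotProduct]
end

section
/- Let L be a full-rank lattice in ℝ^m with L ⊆ L^*, so that the quotient L^*/L is a finite group of some order N, and let {α_ℓ}_{ℓ=1}^N ⊆ L^* be a complete set of representatives of the cosets of L in L^* with α_1 ∈ L. Define the N×N complex matrix S by S_{ℓℓ'} := N^{−1/2} e^{−2πi⟨α_ℓ, α_{ℓ'}⟩}. Then for all indices ℓ₁, ℓ₂, ℓ₃, the Verlinde sum ∑_{ℓ=1}^N S_{ℓ₁ℓ} S_{ℓ₂ℓ} conj(S_{ℓℓ₃}) / S_{1ℓ} equals 1 if α_{ℓ₁} + α_{ℓ₂} − α_{ℓ₃} ∈ L, and equals 0 otherwise. -/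
open Finset Complex

noncomputable section

lemma vl_dual_dual {m : ℕ} (L : Submodule ℤ (Fin m → ℝ))
    (hspan : Submodule.span ℝ (L : Set (Fin m → ℝ)) = ⊤)
    (hLd : L ≤ dualLat L) : dualLat (dualLat L) ≤ L := by
  let B : LinearMap.BilinForm ℝ (Fin m → ℝ) := dotProductBilin ℝ ℝ
  have hBa : ∀ x y, B x y = ∑ i, x i * y i := fun x y => rfl
  have hBs : B.IsSymm := ⟨fun x y => by
    simp only [hBa, RingHom.id_apply]
    exact Finset.sum_congr rfl fun i _ => mul_comm _ _⟩
  have hB : B.Nondegenerate := by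
    refine (LinearMap.IsRefl.nondegenerate_iff_separatingLeft hBs.isRefl).2 ?_
    intro x hx
    have := hx x
    rw [hBa] at this
    exact dotProduct_self_eq_zero.1 this
  have hd : ∀ K : Submodule ℤ (Fin m → ℝ), dualLat K = B.dualSubmodule K := by
    intro K
    ext x
    rw [LinearMap.BilinForm.mem_dualSubmodule]
    simp only [Submodule.mem_one, hBa]
    constructor
    · intro h y hy
      obtain ⟨k, hk⟩ := h y hy
      exact ⟨k, by simp [hk]⟩
    · intro h y hy
      obtain ⟨k, hk⟩ := h y hy
      exact ⟨k, by rw [← hk]; simp⟩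
  let v := Module.Basis.ofSpan hspan.ge
  have : Finite ↑((linearIndepOn_empty ℝ id).extend (Set.empty_subset (L : Set (Fin m → ℝ)))) :=
    Module.Finite.finite_basis v
  have hvL : Submodule.span ℤ (Set.range v) ≤ L :=
    Submodule.span_le.2 (Module.Basis.ofSpan_subset hspan.ge)
  classical
  have hle : L ≤ Submodule.span ℤ (Set.range (B.dualBasis hB v)) := by
    rw [← LinearMap.BilinForm.dualSubmodule_span_of_basis B hB v, ← hd]
    intro x hx y hy
    exact hLd hx y (hvL hy)
  have : DiscreteTopology L := DiscreteTopology.of_subset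
    (t := (L : Set (Fin m → ℝ)))
    (s := (Submodule.span ℤ (Set.range (B.dualBasis hB v)) : Set (Fin m → ℝ)))
    (inferInstanceAs (DiscreteTopology (Submodule.span ℤ (Set.range (B.dualBasis hB v))))) hle
  have : IsZLattice ℝ L := ⟨hspan⟩
  have : Module.Finite ℤ L := ZLattice.module_finite ℝ L
  have : Module.Free ℤ L := ZLattice.module_free ℝ L
  have hb := (Module.Free.chooseBasis ℤ L).ofZLatticeBasis_span ℝ
  have key := LinearMap.BilinForm.dualSubmodule_dualSubmodule_of_basis (R := ℤ) B hB hBs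
    ((Module.Free.chooseBasis ℤ L).ofZLatticeBasis ℝ)
  rw [hb] at key
  rw [hd, hd, key]

/-- The additive phase. -/
def vlE (t : ℝ) : ℂ := Complex.exp (-2 * (Real.pi : ℂ) * Complex.I * (t : ℂ))

lemma vlE_add (s t : ℝ) : vlE (s + t) = vlE s * vlE t := by
  unfold vlE; rw [← Complex.exp_add]; push_cast; ring_nf

lemma vlE_eq_one (t : ℝ) : vlE t = 1 ↔ ∃ k : ℤ, t = k := by
  unfold vlE
  rw [Complex.exp_eq_one_iff]
  have hp : (2 * (Real.pi : ℂ) * Complex.I) ≠ 0 := Complex.two_pi_I_ne_zero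
  constructor
  · rintro ⟨n, hn⟩
    refine ⟨-n, ?_⟩
    have : (2 * (Real.pi : ℂ) * Complex.I) * ((t : ℂ) + n) = 0 := by
      linear_combination -hn
    have h2 := (mul_eq_zero.1 this).resolve_left hp
    have h3 : t + n = 0 := by exact_mod_cast h2
    push_cast
    linarith
  · rintro ⟨k, rfl⟩
    exact ⟨-k, by push_cast; ring⟩

lemma vlE_conj (t : ℝ) : (starRingEnd ℂ) (vlE t) = vlE (-t) := by
  unfold vlE
  rw [← Complex.exp_conj]
  simp [Complex.conj_ofNat]

lemma vlE_ne (t : ℝ) : vlE t ≠ 0 := Complex.exp_ne_zero _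

lemma vl_sum_zero {m N : ℕ}
    (L : Submodule ℤ (Fin m → ℝ))
    (hspan : Submodule.span ℝ (L : Set (Fin m → ℝ)) = ⊤)
    (hLd : L ≤ dualLat L)
    (α : Fin N → (Fin m → ℝ)) (hα : ∀ ℓ, α ℓ ∈ dualLat L)
    (hrep : Function.Bijective fun ℓ : Fin N =>
      (Submodule.Quotient.mk (⟨α ℓ, hα ℓ⟩ : ↥(dualLat L)) :
        (↥(dualLat L)) ⧸ L.comap (dualLat L).subtype))
    (β : Fin m → ℝ) (hβ : β ∈ dualLat L) (hβL : β ∉ L) :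
    ∑ ℓ, vlE (∑ i, β i * α ℓ i) = 0 := by
  have h1 : ∃ γ ∈ dualLat L, ¬ ∃ k : ℤ, ∑ i, β i * γ i = (k : ℝ) := by
    by_contra! h
    exact hβL (vl_dual_dual L hspan hLd fun y hy => by simpa using h y hy)
  obtain ⟨γ, hγ, hγ'⟩ := h1
  have hc : vlE (∑ i, β i * γ i) ≠ 1 := fun h => hγ' ((vlE_eq_one _).1 h)
  let F : ↥(dualLat L) → ℂ := fun x => vlE (∑ i, β i * (x : Fin m → ℝ) i)
  have hF : ∀ x y, F (x + y) = F x * F y := by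
    intro x y
    simp only [F]
    rw [← vlE_add, ← Finset.sum_add_distrib]
    simp [mul_add]
  have hF1 : ∀ x : ↥(dualLat L), (x : Fin m → ℝ) ∈ L → F x = 1 := by
    intro x hx
    exact (vlE_eq_one _).2 (hβ x hx)
  let g : ((↥(dualLat L)) ⧸ L.comap (dualLat L).subtype) → ℂ := fun q => F q.out
  have hg : ∀ x, g (Submodule.Quotient.mk x) = F x := by
    intro x
    have h : (Submodule.Quotient.mk (Quotient.out (Submodule.Quotient.mk x :
        (↥(dualLat L)) ⧸ L.comap (dualLat L).subtype)) :
        (↥(dualLat L)) ⧸ L.comap (dualLat L).subtype) = Submodule.Quotient.mk x :=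
      Quotient.out_eq _
    rw [Submodule.Quotient.eq] at h
    have h2 := hF1 (Quotient.out (Submodule.Quotient.mk x :
        (↥(dualLat L)) ⧸ L.comap (dualLat L).subtype) - x) h
    have h3 := hF (Quotient.out (Submodule.Quotient.mk x :
        (↥(dualLat L)) ⧸ L.comap (dualLat L).subtype) - x) x
    rw [h2, one_mul, sub_add_cancel] at h3
    exact h3
  let e := Equiv.ofBijective _ hrep
  letI : Fintype ((↥(dualLat L)) ⧸ L.comap (dualLat L).subtype) := Fintype.ofEquiv _ e
  have hs : ∑ ℓ, vlE (∑ i, β i * α ℓ i) = ∑ q, g q := by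
    rw [← e.sum_comp]
    refine Finset.sum_congr rfl fun ℓ _ => ?_
    exact (hg ⟨α ℓ, hα ℓ⟩).symm
  have hshift : ∑ q, g q = (∑ q, g q) * vlE (∑ i, β i * γ i) := by
    have hcomp := Equiv.sum_comp (Equiv.addRight (Submodule.Quotient.mk (⟨γ, hγ⟩ : ↥(dualLat L)) :
      (↥(dualLat L)) ⧸ L.comap (dualLat L).subtype)) g
    refine hcomp.symm.trans ?_
    rw [Finset.sum_mul]
    refine Finset.sum_congr rfl fun q _ => ?_
    obtain ⟨x, rfl⟩ := Submodule.Quotient.mk_surjective _ q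
    rw [Equiv.coe_addRight]
    beta_reduce
    rw [← Submodule.Quotient.mk_add, hg, hg, hF]
  rw [hs]
  have : (∑ q, g q) * (1 - vlE (∑ i, β i * γ i)) = 0 := by linear_combination hshift
  exact (mul_eq_zero.1 this).resolve_right (sub_ne_zero.2 (Ne.symm hc))

open scoped Classical in
/-- For a full-rank lattice `L ⊆ ℝ^m` with `L ⊆ L^*`, `N = |L^*/L|`, coset
representatives `α_ℓ` with `α_1 ∈ L`, and `S_{ℓℓ'} = N^{-1/2} e^{-2πi⟨α_ℓ,α_{ℓ'}⟩}`, the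
Verlinde sum `∑_ℓ S_{ℓ₁ℓ} S_{ℓ₂ℓ} conj(S_{ℓℓ₃})/S_{1ℓ}` equals `1` if
`α_{ℓ₁} + α_{ℓ₂} - α_{ℓ₃} ∈ L` and `0` otherwise. -/
theorem lattice_verlinde_formula {m N : ℕ}
    (L : Submodule ℤ (Fin m → ℝ))
    (hfree : Module.Free ℤ L) (hfg : Module.Finite ℤ L)
    (hspan : Submodule.span ℝ (L : Set (Fin m → ℝ)) = ⊤)
    (hLd : L ≤ dualLat L) (hN : 0 < N)
    (hcard : Nat.card ((↥(dualLat L)) ⧸ L.comap (dualLat L).subtype) = N)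
    (α : Fin N → (Fin m → ℝ)) (hα : ∀ ℓ, α ℓ ∈ dualLat L)
    (hrep : Function.Bijective fun ℓ : Fin N =>
      (Submodule.Quotient.mk (⟨α ℓ, hα ℓ⟩ : ↥(dualLat L)) :
        (↥(dualLat L)) ⧸ L.comap (dualLat L).subtype))
    (h1 : α ⟨0, hN⟩ ∈ L)
    (S : Fin N → Fin N → ℂ)
    (hS : ∀ ℓ ℓ', S ℓ ℓ' = (1 / Real.sqrt N : ℝ) *
      Complex.exp (-2 * (Real.pi : ℂ) * Complex.I * ((∑ i, α ℓ i * α ℓ' i : ℝ) : ℂ)))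
    (ℓ₁ ℓ₂ ℓ₃ : Fin N) :
    (∑ ℓ, S ℓ₁ ℓ * S ℓ₂ ℓ * (starRingEnd ℂ) (S ℓ ℓ₃) / S ⟨0, hN⟩ ℓ)
      = if α ℓ₁ + α ℓ₂ - α ℓ₃ ∈ L then 1 else 0 := by
  have hS' : ∀ ℓ ℓ', S ℓ ℓ' = (1 / Real.sqrt N : ℝ) * vlE (∑ i, α ℓ i * α ℓ' i) := hS
  set c : ℝ := 1 / Real.sqrt N with hcdef
  have hNr : (0 : ℝ) < N := by exact_mod_cast hN
  have hc0 : c ≠ 0 := by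
    rw [hcdef]; have := Real.sqrt_pos.2 hNr; positivity
  have hc2 : c * c = 1 / N := by
    rw [hcdef, div_mul_div_comm, Real.mul_self_sqrt hNr.le, one_mul]
  set β : Fin m → ℝ := α ℓ₁ + α ℓ₂ - α ℓ₃ - α ⟨0, hN⟩ with hβdef
  have hβ : β ∈ dualLat L :=
    sub_mem (sub_mem (add_mem (hα _) (hα _)) (hα _)) (hα _)
  have hiff : β ∈ L ↔ α ℓ₁ + α ℓ₂ - α ℓ₃ ∈ L := by
    constructor
    · intro h
      have := add_mem h h1
      rwa [hβdef, sub_add_cancel] at this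
    · intro h
      exact sub_mem h h1
  have hterm : ∀ ℓ, S ℓ₁ ℓ * S ℓ₂ ℓ * (starRingEnd ℂ) (S ℓ ℓ₃) / S ⟨0, hN⟩ ℓ
      = ((1 / N : ℝ) : ℂ) * vlE (∑ i, β i * α ℓ i) := by
    intro ℓ
    have hsum : (∑ i, α ℓ₁ i * α ℓ i) + (∑ i, α ℓ₂ i * α ℓ i) + -(∑ i, α ℓ i * α ℓ₃ i)
        = (∑ i, β i * α ℓ i) + ∑ i, α ⟨0, hN⟩ i * α ℓ i := by
      rw [← Finset.sum_neg_distrib, ← Finset.sum_add_distrib, ← Finset.sum_add_distrib,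
        ← Finset.sum_add_distrib]
      refine Finset.sum_congr rfl fun i _ => ?_
      simp only [hβdef, Pi.sub_apply, Pi.add_apply]
      ring
    have hE := congrArg vlE hsum
    rw [vlE_add, vlE_add, vlE_add] at hE
    have hcC : (c : ℂ) ≠ 0 := by exact_mod_cast hc0
    rw [hS', hS', hS', hS', map_mul, Complex.conj_ofReal, vlE_conj,
      div_eq_iff (mul_ne_zero hcC (vlE_ne _)), ← hc2]
    push_cast
    linear_combination (c : ℂ) ^ 3 * hE
  rw [Finset.sum_congr rfl fun ℓ _ => hterm ℓ, ← Finset.mul_sum]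
  by_cases h : β ∈ L
  · rw [if_pos (hiff.1 h)]
    have : ∀ ℓ, vlE (∑ i, β i * α ℓ i) = 1 := by
      intro ℓ
      rw [vlE_eq_one]
      obtain ⟨k, hk⟩ := hα ℓ β h
      exact ⟨k, by rw [← hk]; exact Finset.sum_congr rfl fun i _ => mul_comm _ _⟩
    have hNC : (N : ℂ) ≠ 0 := by exact_mod_cast hN.ne'
    simp [this, hNC]
  · rw [if_neg fun h' => h (hiff.2 h'), vl_sum_zero L hspan hLd α hα hrep β hβ h, mul_zero]

end
end

section
/- Let L be a full-rank even lattice in ℝ^m (a free ℤ-submodule of rank m spanning ℝ^m with ⟨x,x⟩ ∈ 2ℤ for all x ∈ L), let N be the order of the finite group L^*/L, and let {α_ℓ}_{ℓ=1}^N ⊆ L^* be a complete set of coset representatives. Define the N×N complex matrices T and S by T_{ℓℓ'} := e^{πi(⟨α_ℓ,α_ℓ⟩ − m/12)} δ_{ℓℓ'} and S_{ℓℓ'} := N^{−1/2} e^{−2πi⟨α_ℓ,α_{ℓ'}⟩}. Then (S·T)³ = S² as N×N matrices. -/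
open Finset Complex

noncomputable section

section GaussSec
open Filter Topology

lemma summ_real : Summable (fun n : ℤ => Real.exp (-Real.pi * (n:ℝ)^2)) := by
  have := (summable_jacobiTheta₂_term_iff 0 I).2 (by simp)
  refine this.norm.congr fun n => ?_
  rw [norm_jacobiTheta₂_term]; simp

lemma tsum_lim {F : ℝ → ℤ → ℂ} {R : ℝ → ℝ} {l : Filter ℝ} (hR : Tendsto R l atTop)
    (h0 : ∀ᶠ e in l, F e 0 = 1)
    (hF : ∀ᶠ e in l, ∀ n, ‖F e n‖ ≤ Real.exp (-Real.pi * R e * (n:ℝ)^2)) :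
    Tendsto (fun e => ∑' n, F e n) l (𝓝 1) := by
  have key := tendsto_tsum_of_dominated_convergence (𝓕 := l) (f := F)
    (g := fun n : ℤ => if n = 0 then (1:ℂ) else 0) summ_real ?_ ?_
  · simpa using key
  · intro n
    by_cases hn : n = 0
    · subst hn
      simp only [if_true]
      exact tendsto_const_nhds.congr' (h0.mono fun e he => he.symm)
    · simp only [hn, if_false]
      refine squeeze_zero_norm' (hF.mono fun e he => he n) ?_
      refine Real.tendsto_exp_atBot.comp ?_
      have hp : 0 < Real.pi * (n:ℝ)^2 := by positivity
      have := (hR.const_mul_atTop hp)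
      refine (tendsto_neg_atTop_atBot.comp this).congr fun e => ?_
      simp; ring
  · filter_upwards [hF, hR.eventually_ge_atTop 1] with e he h1 n
    refine (he n).trans (Real.exp_le_exp.2 ?_)
    have hp : 0 ≤ Real.pi * (n:ℝ)^2 := by positivity
    nlinarith

lemma half_mul (e : ℝ) (he : 0 < e) (w : ℂ) (hw : w ≠ 0) :
    ((e:ℂ) * w) ^ (1/2:ℂ) = (Real.sqrt e : ℂ) * w ^ (1/2:ℂ) := by
  have h1 : (e:ℂ) ≠ 0 := by exact_mod_cast he.ne'
  rw [Complex.cpow_def_of_ne_zero (mul_ne_zero h1 hw), Complex.log_ofReal_mul he hw, add_mul,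
    Complex.exp_add, Complex.cpow_def_of_ne_zero hw]
  congr 1
  rw [Real.sqrt_eq_rpow, Complex.ofReal_cpow he.le, Complex.cpow_def_of_ne_zero h1,
    Complex.ofReal_log he.le]
  norm_num

lemma theta_res (n : ℕ) (hn : 0 < n) (r : ℤ) :
    Tendsto (fun e : ℝ => (Real.sqrt e : ℂ) * ∑' j : ℤ, cexp (-Real.pi * e * (n * j + r)^2))
      (𝓝[>] 0) (𝓝 (1 / n)) := by
  have hn0 : (n:ℂ) ≠ 0 := by exact_mod_cast hn.ne'
  have hn0' : (0:ℝ) < n := by exact_mod_cast hn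
  have h1 : Tendsto (fun e : ℝ => ∑' j : ℤ,
      cexp (-Real.pi * j^2 / (e * n^2) + 2 * Real.pi * I * j * r / n)) (𝓝[>] 0) (𝓝 1) := by
    refine tsum_lim (R := fun e => (1/(n:ℝ)^2) * e⁻¹) ?_ ?_ ?_
    · exact tendsto_inv_nhdsGT_zero.const_mul_atTop (by positivity)
    · exact Eventually.of_forall fun e => by simp
    · refine Eventually.of_forall fun e j => le_of_eq ?_
      rw [Complex.norm_exp]
      congr 1
      have : (-Real.pi * j^2 / (e * n^2) + 2 * Real.pi * I * j * r / n : ℂ) =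
        ((-Real.pi * (1/(n:ℝ)^2 * e⁻¹) * (j:ℝ)^2 : ℝ) : ℂ) + ((2 * Real.pi * j * r / n : ℝ) : ℂ) * I := by
        push_cast; ring
      rw [this]; simp [-ofReal_mul, -ofReal_div]
  have h2 := h1.const_mul (1 / (n:ℂ))
  rw [mul_one] at h2
  refine h2.congr' ?_
  filter_upwards [self_mem_nhdsWithin] with e he
  have he : 0 < e := he
  have he0 : (e:ℂ) ≠ 0 := by exact_mod_cast he.ne'
  have hs0 : (Real.sqrt e:ℂ) ≠ 0 := by exact_mod_cast (Real.sqrt_pos.2 he).ne'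
  have hq := Complex.tsum_exp_neg_quadratic (a := e * (n:ℂ)^2)
    (by have : (e * (n:ℂ)^2) = ((e * n^2 : ℝ) : ℂ) := by push_cast; rfl
        rw [this, ofReal_re]; positivity) (-e * n * r)
  have hl : ∑' j : ℤ, cexp (-Real.pi * e * (n * j + r)^2) = cexp (-Real.pi * e * r^2) *
      ∑' j : ℤ, cexp (-Real.pi * (e * (n:ℂ)^2) * j ^ 2 + 2 * Real.pi * (-e * n * r) * j) := by
    rw [← tsum_mul_left]
    refine tsum_congr fun j => ?_
    rw [← Complex.exp_add]; congr 1; ring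
  have hc : ((e:ℂ) * (n:ℂ)^2) ^ (1/2:ℂ) = Real.sqrt e * n := by
    rw [half_mul e he _ (pow_ne_zero _ hn0)]
    congr 1
    have : (n:ℂ)^2 = ((n^2 : ℝ) : ℂ) := by push_cast; rfl
    rw [this, show (1/2:ℂ) = ((1/2:ℝ):ℂ) by push_cast; rfl, ← Complex.ofReal_cpow (by positivity),
      ← Real.sqrt_eq_rpow, Real.sqrt_sq hn0'.le]
    simp
  rw [hl, hq, hc]
  have : ∑' j : ℤ, cexp (-Real.pi * j^2 / (e * n^2) + 2 * Real.pi * I * j * r / n) =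
    cexp (-Real.pi * e * r^2) * ∑' j : ℤ, cexp (-Real.pi / (e * (n:ℂ)^2) * (j + I * (-e * n * r))^2) := by
    rw [← tsum_mul_left]
    refine tsum_congr fun j => ?_
    rw [← Complex.exp_add]; congr 1
    field_simp
    ring_nf
    simp only [I_sq]
    ring
  rw [this]
  field_simp

lemma summ_cplx (a : ℂ) (ha : 0 < a.re) : Summable (fun k : ℤ => cexp (-Real.pi * a * k^2)) := by
  have := (summable_jacobiTheta₂_term_iff 0 (I * a)).2 (by simpa using ha)
  refine this.congr fun n => ?_
  rw [jacobiTheta₂_term]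
  congr 1
  ring_nf
  simp only [I_sq]
  ring

lemma gauss_even (n : ℕ) (hn : 0 < n) (hev : Even n) :
    ∑ k : Fin n, cexp (Real.pi * I * (k:ℂ)^2 / n) = Real.sqrt n * cexp (Real.pi * I / 4) := by
  have hn0 : (n:ℂ) ≠ 0 := by exact_mod_cast hn.ne'
  have hn0' : (0:ℝ) < n := by exact_mod_cast hn
  have : NeZero n := ⟨hn.ne'⟩
  have hA : Tendsto (fun e : ℝ => (Real.sqrt e : ℂ) *
      ∑' k : ℤ, cexp (-Real.pi * (e - I / n) * k^2)) (𝓝[>] 0)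
      (𝓝 (∑ k : Fin n, cexp (Real.pi * I * (k:ℂ)^2 / n) * (1/n))) := by
    have h1 := tendsto_finsetSum (univ : Finset (Fin n)) fun (k : Fin n) _ =>
      (theta_res n hn (k:ℕ)).const_mul (cexp (Real.pi * I * (k:ℂ)^2 / n))
    refine h1.congr' ?_
    filter_upwards [self_mem_nhdsWithin] with e he
    have he : 0 < e := he
    have hs := summ_cplx (e - I / n) (by
      have : (e - I / n : ℂ) = (e:ℂ) - ((1/n:ℝ):ℂ) * I := by push_cast; ring
      rw [this]; simpa [-one_div] using he)
    rw [← (Int.divModEquiv n).symm.tsum_eq]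
    have hs' := (Int.divModEquiv n).symm.summable_iff.2 hs
    have hs2 := (Equiv.prodComm (Fin n) ℤ).summable_iff.2 hs'
    rw [← (Equiv.prodComm (Fin n) ℤ).tsum_eq]
    have hs3 := hs2.tsum_prod
    simp only [Function.comp_def] at hs3
    rw [hs3, tsum_fintype, mul_sum]
    refine sum_congr rfl fun k _ => ?_
    rw [mul_left_comm]
    congr 1
    rw [← tsum_mul_left]
    refine tsum_congr fun j => ?_
    simp only [Equiv.prodComm_apply, Prod.swap, Int.divModEquiv_symm_apply]
    obtain ⟨a, rfl⟩ := hev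
    rw [← Complex.exp_add]
    rw [Complex.exp_eq_exp_iff_exists_int]
    refine ⟨-(a * j^2 + j * k), ?_⟩
    have ha0 : (a:ℂ) ≠ 0 := by
      intro h; apply hn0; push_cast; rw [h]; simp
    push_cast
    rw [← two_mul (a:ℂ)]
    field_simp
    ring
  have hB : Tendsto (fun e : ℝ => (Real.sqrt e : ℂ) *
      ∑' k : ℤ, cexp (-Real.pi * (e - I / n) * k^2)) (𝓝[>] 0)
      (𝓝 (1 / (-I / n)^(1/2:ℂ) * (1 / n))) := by
    have h1 : Tendsto (fun e : ℝ => ∑' j : ℤ,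
        cexp (-Real.pi * (1 / (e * n^2) + I / n) * j^2)) (𝓝[>] 0) (𝓝 1) := by
      refine tsum_lim (R := fun e => (1/(n:ℝ)^2) * e⁻¹) ?_ ?_ ?_
      · exact tendsto_inv_nhdsGT_zero.const_mul_atTop (by positivity)
      · exact Eventually.of_forall fun e => by simp
      · refine Eventually.of_forall fun e j => le_of_eq ?_
        rw [Complex.norm_exp]
        congr 1
        have : (-Real.pi * (1 / (e * n^2) + I / n) * j^2 : ℂ) =
          ((-Real.pi * (1/(n:ℝ)^2 * e⁻¹) * (j:ℝ)^2 : ℝ) : ℂ) + ((-Real.pi * j^2 / n : ℝ) : ℂ) * I := by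
          push_cast; ring
        rw [this]; simp [-ofReal_mul, -ofReal_div]
    have h2 : Tendsto (fun e : ℝ => ((e:ℂ) - I / n)^(1/2:ℂ)) (𝓝[>] 0) (𝓝 ((-I / n)^(1/2:ℂ))) := by
      have : ContinuousAt (fun e : ℝ => ((e:ℂ) - I / n)^(1/2:ℂ)) 0 := by
        refine ContinuousAt.cpow (by fun_prop) (by fun_prop) ?_
        right
        simp
        exact hn.ne'
      have := this.tendsto.mono_left (nhdsWithin_le_nhds (s := Set.Ioi 0))
      simpa [neg_div] using this
    have h3 : Tendsto (fun e : ℝ => (n^2 / (1 + n * I * e) : ℂ)^(1/2:ℂ)) (𝓝[>] 0) (𝓝 n) := by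
      have : ContinuousAt (fun e : ℝ => (n^2 / (1 + n * I * e) : ℂ)^(1/2:ℂ)) 0 := by
        refine ContinuousAt.cpow ?_ (by fun_prop) ?_
        · refine ContinuousAt.div (by fun_prop) (by fun_prop) (by simp)
        · left
          have : ((n:ℂ)^2 / (1 + n * I * (0:ℝ)) : ℂ) = ((n^2 : ℝ) : ℂ) := by simp
          rw [this, ofReal_re]; positivity
      have := this.tendsto.mono_left (nhdsWithin_le_nhds (s := Set.Ioi 0))
      convert this using 2
      have : ((n:ℂ)^2 / (1 + n * I * (0:ℝ)) : ℂ) = ((n^2 : ℝ) : ℂ) := by simp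
      rw [this, show (1/2:ℂ) = ((1/2:ℝ):ℂ) by push_cast; rfl, ← Complex.ofReal_cpow (by positivity),
        ← Real.sqrt_eq_rpow, Real.sqrt_sq hn0'.le]
      simp
    have hne : (-I / n : ℂ)^(1/2:ℂ) ≠ 0 := by
      rw [Ne, cpow_eq_zero_iff]; simp [hn0]
    have h4 := (((tendsto_const_nhds (x := (1:ℂ))).div h2 hne).mul ((tendsto_const_nhds (x := (1:ℂ))).div h3 hn0)).mul h1
    rw [mul_one] at h4
    refine h4.congr' ?_
    filter_upwards [self_mem_nhdsWithin] with e he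
    have he : 0 < e := he
    have he0 : (e:ℂ) ≠ 0 := by exact_mod_cast he.ne'
    have hs0 : (Real.sqrt e:ℂ) ≠ 0 := by exact_mod_cast (Real.sqrt_pos.2 he).ne'
    have hd : (1 + n * I * e : ℂ) ≠ 0 := by
      intro h
      have := congrArg Complex.re h
      simp at this
    have hre : 0 < (e - I / n : ℂ).re := by
      have : (e - I / n : ℂ) = (e:ℂ) - ((1/n:ℝ):ℂ) * I := by push_cast; ring
      rw [this]; simpa [-one_div] using he
    rw [Complex.tsum_exp_neg_mul_int_sq hre]
    set δ : ℂ := e * (n^2 / (1 + n * I * e)) with hδ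
    have hδi : 1 / δ = 1 / (e * n^2) + I / n := by
      rw [hδ]; field_simp
    have hδ0 : δ ≠ 0 := mul_ne_zero he0 (div_ne_zero (pow_ne_zero _ hn0) hd)
    have hδre : 0 < δ.re := by
      have h5 : 0 < (1/δ).re := by
        have : (1 / (e * n^2) + I / n : ℂ) = ((1 / (e * n^2) : ℝ):ℂ) + ((1/n:ℝ):ℂ) * I := by
          push_cast; ring
        rw [hδi, this]
        have : 0 < 1 / (e * (n:ℝ)^2) := by positivity
        simpa [-one_div, -ofReal_div] using this
      rw [one_div, Complex.inv_re] at h5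
      exact (div_pos_iff_of_pos_right (Complex.normSq_pos.2 hδ0)).1 h5
    have hen : (e - I / n : ℂ) ≠ 0 := by
      intro h; rw [h] at hre; simp at hre
    have h6 : ∑' k : ℤ, cexp (-Real.pi / (e - I / n) * k^2) =
        ∑' k : ℤ, cexp (-Real.pi * δ * k^2) := by
      refine tsum_congr fun k => ?_
      obtain ⟨a, ha⟩ := hev
      rw [Complex.exp_eq_exp_iff_exists_int]
      refine ⟨-(a * k^2), ?_⟩
      have h7 : 1 / (e - I / n : ℂ) = n * I + δ := by
        rw [hδ]
        rw [div_eq_iff hen]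
        field_simp
        ring_nf
        simp only [I_sq]
        ring_nf
        rw [show Complex.I^3 = -Complex.I by rw [pow_succ, I_sq]; ring]
        ring
      rw [div_eq_mul_one_div, h7]
      have : (n:ℂ) = a + a := by rw [ha]; push_cast; rfl
      rw [this]; push_cast; ring
    rw [h6, Complex.tsum_exp_neg_mul_int_sq hδre, hδ, half_mul e he _ (div_ne_zero (pow_ne_zero _ hn0) hd), ← hδ]
    have h8 : ∑' j : ℤ, cexp (-Real.pi * (1 / (e * n^2) + I / n) * j^2) =
      ∑' j : ℤ, cexp (-Real.pi / δ * j^2) := by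
      refine tsum_congr fun j => ?_
      rw [← hδi, div_eq_mul_one_div (-Real.pi : ℂ)]
    rw [h8]
    simp only [Pi.div_apply]
    field_simp
  have := tendsto_nhds_unique hA hB
  rw [← sum_mul] at this
  have h9 := mul_right_cancel₀ (one_div_ne_zero hn0) this
  rw [h9]
  have hmI : (-I : ℂ)^(1/2:ℂ) = cexp (-(Real.pi * I / 4)) := by
    rw [Complex.cpow_def_of_ne_zero (by simp), Complex.log_neg_I]
    congr 1; ring
  have : (-I / n : ℂ) = ((1/n:ℝ):ℂ) * (-I) := by push_cast; ring
  rw [this, half_mul _ (by positivity) _ (by simp), hmI, Complex.exp_neg]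
  rw [one_div, one_div, Real.sqrt_inv]
  push_cast
  simp
  ring

end GaussSec


lemma gabs_sub {A : Type*} [AddCommGroup A] [Fintype A] {N : ℕ} (f : A → ℂ) (b : A → AddChar A ℂ)
    (hf : ∀ x y, f (x + y) = f x * f y * b x y) (H : AddSubgroup A) (hH : ∀ h ∈ H, f h = 1)
    (a : Fin N → A) (ha : ∀ l, ∀ h ∈ H, b (a l) h = 1)
    (hex : ∀ x, (∀ h ∈ H, b x h = 1) → ∃ l, x - a l ∈ H)
    (huniq : ∀ l l', a l - a l' ∈ H → l = l') :
    ∃ c : ℕ, 0 < c ∧ ∑ x, f x = c * ∑ l, f (a l) := by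
  classical
  refine ⟨Fintype.card H, Fintype.card_pos, ?_⟩
  have hc : (Fintype.card H : ℂ) ≠ 0 := by exact_mod_cast Fintype.card_pos.ne'
  have h1 : (Fintype.card H : ℂ) * ∑ x, f x =
      Fintype.card H * ∑ x, if (∀ h ∈ H, b x h = 1) then f x else 0 := by
    calc (Fintype.card H : ℂ) * ∑ x, f x = ∑ h : H, ∑ x, f (x + h) := by
          have : ∀ h : H, ∑ x, f (x + h) = ∑ x, f x := fun h =>
            Equiv.sum_comp (Equiv.addRight (h : A)) f
          simp [this]
      _ = ∑ x, f x * ∑ h : H, (b x).compAddMonoidHom H.subtype h := by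
          rw [sum_comm]
          refine sum_congr rfl fun x _ => ?_
          rw [mul_sum]
          refine sum_congr rfl fun h _ => ?_
          rw [hf, hH h h.2, mul_one]; rfl
      _ = _ := by
          rw [mul_sum]
          refine sum_congr rfl fun x _ => ?_
          rw [AddChar.sum_eq_ite]
          have : ((b x).compAddMonoidHom H.subtype = 0) ↔ (∀ h ∈ H, b x h = 1) := by
            constructor
            · intro h k hk
              simpa using DFunLike.congr_fun h (⟨k, hk⟩ : H)
            · intro h
              ext k
              simpa using h k k.2
          simp only [this]
          split_ifs <;> ring
  have h2 := mul_left_cancel₀ hc h1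
  rw [h2, ← sum_filter]
  have h3 : (Fintype.card H : ℂ) * ∑ l, f (a l) = ∑ p : Fin N × H, f (a p.1 + p.2) := by
    rw [Fintype.sum_prod_type, mul_sum]
    refine sum_congr rfl fun l _ => ?_
    have : ∀ h : H, f (a l + h) = f (a l) := fun h => by
      rw [hf, hH h h.2, ha l h h.2]; ring
    simp [this]
  rw [h3]
  symm
  refine sum_bij (fun p _ => a p.1 + p.2) ?_ ?_ ?_ ?_
  · intro p _
    simp only [mem_filter, mem_univ, true_and]
    intro h hh
    -- symmetric computation through f
    have e1 := hf (a p.1 + p.2) h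
    have e2 := hf (a p.1) (p.2 + h)
    have e3 := hf (a p.1) p.2
    rw [ha _ _ (H.add_mem p.2.2 hh), hH _ (H.add_mem p.2.2 hh)] at e2
    rw [ha _ _ p.2.2, hH _ p.2.2] at e3
    rw [hH _ hh, e3, add_assoc, e2] at e1
    by_cases h0 : f (a p.1) = 0
    · exfalso
      have := hf (a p.1) (-(a p.1))
      rw [h0, add_neg_cancel, hH 0 H.zero_mem] at this
      simp at this
    · field_simp at e1
      exact e1.symm
  · rintro ⟨l, h⟩ _ ⟨l', h'⟩ _ e
    simp only at e
    have : l = l' := huniq _ _ (by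
      have : a l - a l' = h' - h := by
        rw [sub_eq_sub_iff_add_eq_add, e, add_comm]
      rw [this]; exact H.sub_mem h'.2 h.2)
    subst this
    have := add_left_cancel e
    simp [Subtype.ext_iff, this]
  · intro x hx
    obtain ⟨l, hl⟩ := hex x (by simpa using hx)
    exact ⟨(l, ⟨x - a l, hl⟩), mem_univ _, by simp⟩
  · intro p _; rfl

lemma gabs_norm {A : Type*} [AddCommGroup A] [Fintype A] (f : A → ℂ) (b : A → AddChar A ℂ)
    (hf : ∀ x y, f (x + y) = f x * f y * b x y) (hn : ∀ x, ‖f x‖ = 1) (h0 : f 0 = 1)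
    (hb : ∀ x, (∀ y, b x y = 1) → x = 0) :
    ‖∑ x, f x‖ = Real.sqrt (Fintype.card A) := by
  classical
  have hcc : ∀ y, f y * (starRingEnd ℂ) (f y) = 1 := fun y => by
    rw [Complex.mul_conj, Complex.normSq_eq_norm_sq, hn]; simp
  have h1 : (∑ x, f x) * (starRingEnd ℂ) (∑ x, f x) = Fintype.card A := by
    calc (∑ x, f x) * (starRingEnd ℂ) (∑ x, f x)
        = ∑ y, (∑ x, f (x + y)) * (starRingEnd ℂ) (f y) := by
          rw [map_sum, mul_sum]
          refine sum_congr rfl fun y _ => ?_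
          congr 1
          exact (Equiv.sum_comp (Equiv.addRight y) f).symm
      _ = ∑ x, f x * ∑ y, b x y := by
          simp_rw [sum_mul, mul_sum]
          rw [sum_comm]
          refine sum_congr rfl fun x _ => sum_congr rfl fun y _ => ?_
          rw [hf]
          linear_combination (f x * b x y) * hcc y
      _ = ∑ x : A, if x = 0 then (Fintype.card A : ℂ) else 0 := by
          refine sum_congr rfl fun x _ => ?_
          rw [AddChar.sum_eq_ite]
          by_cases hx : x = 0
          · subst hx
            have : b 0 = 0 := by
              ext y
              have := hf 0 y
              rw [zero_add, h0, one_mul] at this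
              have hy : f y ≠ 0 := by
                intro h; have := hn y; rw [h] at this; simp at this
              have := mul_left_cancel₀ hy ((mul_one _).trans this)
              simpa using this.symm
            simp [this, h0]
          · have : b x ≠ 0 := fun h => hx (hb x fun y => by rw [h]; simp)
            simp [this, hx]
      _ = _ := by simp
  rw [Complex.mul_conj, Complex.normSq_eq_norm_sq] at h1
  have h2 : ‖∑ x, f x‖^2 = (Fintype.card A : ℝ) := by exact_mod_cast h1
  rw [← h2, Real.sqrt_sq (norm_nonneg _)]

abbrev DG {m : ℕ} (L : Submodule ℤ (Fin m → ℝ)) := (↥(dualLat L)) ⧸ L.comap (dualLat L).subtype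

def EvenL {m : ℕ} (L : Submodule ℤ (Fin m → ℝ)) : Prop :=
  ∀ x ∈ L, ∃ k : ℤ, x ⬝ᵥ x = 2 * (k : ℝ)

def qe {m : ℕ} (x : Fin m → ℝ) : ℂ := cexp (Real.pi * I * ((x ⬝ᵥ x : ℝ) : ℂ))
def be {m : ℕ} (x y : Fin m → ℝ) : ℂ := cexp (2 * Real.pi * I * ((x ⬝ᵥ y : ℝ) : ℂ))

lemma qe_add {m : ℕ} (x y : Fin m → ℝ) : qe (x + y) = qe x * qe y * be x y := by
  simp only [qe, be, ← Complex.exp_add]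
  congr 1
  rw [dotProduct_add, add_dotProduct, add_dotProduct, dotProduct_comm y x]
  push_cast; ring

lemma be_add {m : ℕ} (x y z : Fin m → ℝ) : be x (y + z) = be x y * be x z := by
  simp only [be, ← Complex.exp_add]
  congr 1
  rw [dotProduct_add]
  push_cast; ring

lemma be_comm {m : ℕ} (x y : Fin m → ℝ) : be x y = be y x := by
  simp only [be, dotProduct_comm]

lemma be_eq_one {m : ℕ} (x y : Fin m → ℝ) : be x y = 1 ↔ ∃ k : ℤ, x ⬝ᵥ y = k := by
  rw [be, Complex.exp_eq_one_iff]
  refine exists_congr fun k => ?_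
  have h : (2 * Real.pi * I : ℂ) ≠ 0 := by simp [Real.pi_ne_zero]
  rw [mul_comm (k:ℂ), mul_right_inj' h]
  exact_mod_cast Iff.rfl

lemma qe_eq_one {m : ℕ} {L : Submodule ℤ (Fin m → ℝ)} (hL : EvenL L) {x : Fin m → ℝ} (hx : x ∈ L) :
    qe x = 1 := by
  obtain ⟨k, hk⟩ := hL x hx
  rw [qe, Complex.exp_eq_one_iff]
  exact ⟨k, by rw [hk]; push_cast; ring⟩

lemma qe_norm {m : ℕ} (x : Fin m → ℝ) : ‖qe x‖ = 1 := by
  rw [qe, show (Real.pi * I * ((x ⬝ᵥ x : ℝ) : ℂ)) = ((Real.pi * (x ⬝ᵥ x) : ℝ) : ℂ) * I by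
    push_cast; ring, Complex.norm_exp_ofReal_mul_I]

lemma be_dual {m : ℕ} {L : Submodule ℤ (Fin m → ℝ)} {x y : Fin m → ℝ} (hx : x ∈ dualLat L)
    (hy : y ∈ L) : be x y = 1 := (be_eq_one x y).2 (hx y hy)

def qf {m : ℕ} (L : Submodule ℤ (Fin m → ℝ)) (q : DG L) : ℂ := qe (q.out : dualLat L).1

lemma out_spec {m : ℕ} {L : Submodule ℤ (Fin m → ℝ)} (x : dualLat L) :
    ((Submodule.Quotient.mk x : DG L).out : dualLat L).1 - x.1 ∈ L := by
  have h : (Submodule.Quotient.mk ((Submodule.Quotient.mk x : DG L).out) : DG L) =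
    Submodule.Quotient.mk x := Quotient.out_eq _
  rw [Submodule.Quotient.eq] at h
  simpa using h

lemma qf_mk {m : ℕ} {L : Submodule ℤ (Fin m → ℝ)} (hL : EvenL L) (x : dualLat L) :
    qf L (Submodule.Quotient.mk x) = qe x.1 := by
  have h := out_spec x
  rw [qf]
  set y := ((Submodule.Quotient.mk x : DG L).out : dualLat L).1
  have : y = x.1 + (y - x.1) := by abel
  rw [this, qe_add, qe_eq_one hL h, be_dual x.2 h]; ring

def bf {m : ℕ} (L : Submodule ℤ (Fin m → ℝ)) (p q : DG L) : ℂ :=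
  be (p.out : dualLat L).1 (q.out : dualLat L).1

lemma bf_mk {m : ℕ} {L : Submodule ℤ (Fin m → ℝ)} (hL : EvenL L) (x y : dualLat L) :
    bf L (Submodule.Quotient.mk x) (Submodule.Quotient.mk y) = be x.1 y.1 := by
  rw [bf]
  have hx := out_spec x
  have hy := out_spec y
  set x' := ((Submodule.Quotient.mk x : DG L).out : dualLat L)
  set y' := ((Submodule.Quotient.mk y : DG L).out : dualLat L)
  have e1 : y'.1 = y.1 + (y'.1 - y.1) := by abel
  have e2 : x'.1 = x.1 + (x'.1 - x.1) := by abel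
  rw [e1, be_add, be_dual x'.2 hy, mul_one, be_comm, e2, be_add, be_dual y.2 hx, mul_one, be_comm]

def bchar {m : ℕ} (L : Submodule ℤ (Fin m → ℝ)) (hL : EvenL L) (p : DG L) : AddChar (DG L) ℂ where
  toFun := bf L p
  map_zero_eq_one' := by
    obtain ⟨x, rfl⟩ := Submodule.Quotient.mk_surjective _ p
    rw [← Submodule.Quotient.mk_zero, bf_mk hL]
    simp [be]
  map_add_eq_mul' := by
    intro q r
    obtain ⟨x, rfl⟩ := Submodule.Quotient.mk_surjective _ p
    obtain ⟨y, rfl⟩ := Submodule.Quotient.mk_surjective _ q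
    obtain ⟨z, rfl⟩ := Submodule.Quotient.mk_surjective _ r
    rw [← Submodule.Quotient.mk_add, bf_mk hL, bf_mk hL, bf_mk hL]
    exact be_add _ _ _

lemma bchar_mk {m : ℕ} {L : Submodule ℤ (Fin m → ℝ)} (hL : EvenL L) (x y : dualLat L) :
    bchar L hL (Submodule.Quotient.mk x) (Submodule.Quotient.mk y) = be x.1 y.1 := bf_mk hL x y

lemma qf_add {m : ℕ} {L : Submodule ℤ (Fin m → ℝ)} (hL : EvenL L) (p q : DG L) :
    qf L (p + q) = qf L p * qf L q * bchar L hL p q := by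
  obtain ⟨x, rfl⟩ := Submodule.Quotient.mk_surjective _ p
  obtain ⟨y, rfl⟩ := Submodule.Quotient.mk_surjective _ q
  rw [← Submodule.Quotient.mk_add, qf_mk hL, qf_mk hL, qf_mk hL, bchar_mk hL]
  exact qe_add _ _

lemma even_integral {m : ℕ} {L : Submodule ℤ (Fin m → ℝ)} (hL : EvenL L) {x y : Fin m → ℝ}
    (hx : x ∈ L) (hy : y ∈ L) : ∃ k : ℤ, x ⬝ᵥ y = k := by
  obtain ⟨a, ha⟩ := hL x hx
  obtain ⟨b, hb⟩ := hL y hy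
  obtain ⟨c, hc⟩ := hL _ (L.add_mem hx hy)
  refine ⟨c - a - b, ?_⟩
  rw [dotProduct_add, add_dotProduct, add_dotProduct, dotProduct_comm y x] at hc
  push_cast; linarith

lemma dual_dual {m : ℕ} {L : Submodule ℤ (Fin m → ℝ)}
    (hfree : Module.Free ℤ L) (hfg : Module.Finite ℤ L)
    (hrank : Module.finrank ℤ L = m)
    (hspan : Submodule.span ℝ (L : Set (Fin m → ℝ)) = ⊤) (x : Fin m → ℝ)
    (hx : ∀ y ∈ dualLat L, ∃ k : ℤ, x ⬝ᵥ y = k) : x ∈ L := by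
  let b := Module.finBasisOfFinrankEq ℤ L hrank
  let c : Fin m → (Fin m → ℝ) := fun i => (b i : Fin m → ℝ)
  have hc : Submodule.span ℤ (Set.range c) = L := by
    have h1 := b.span_eq
    have h2 := congrArg (Submodule.map L.subtype) h1
    rw [Submodule.map_span, Submodule.map_top, Submodule.range_subtype, ← Set.range_comp] at h2
    exact h2
  have hc2 : ⊤ ≤ Submodule.span ℝ (Set.range c) := by
    rw [← hspan, Submodule.span_le]
    intro l hl
    rw [SetLike.mem_coe, ← hc] at hl
    exact Submodule.span_le_restrictScalars ℤ ℝ _ hl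
  have hli : LinearIndependent ℝ c :=
    linearIndependent_of_top_le_span_of_card_eq_finrank hc2 (by simp)
  let bb := Module.Basis.mk hli hc2
  have hbb : Submodule.span ℤ (Set.range bb) = L := by
    rw [Module.Basis.coe_mk]; exact hc
  have hdot : ∀ j (z : Fin m → ℝ), z ⬝ᵥ (fun i => bb.repr (Pi.single i 1) j) = bb.repr z j := by
    intro j z
    conv_rhs => rw [pi_eq_sum_univ' z]
    simp [dotProduct, Finsupp.finsetSum_apply]
  rw [← hbb, Module.Basis.mem_span_iff_repr_mem]
  intro j
  obtain ⟨k, hk⟩ := hx (fun i => bb.repr (Pi.single i 1) j) (by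
    intro l hl
    rw [← hbb, Module.Basis.mem_span_iff_repr_mem] at hl
    obtain ⟨k, hk⟩ := hl j
    refine ⟨k, ?_⟩
    rw [← hdot, dotProduct_comm] at hk
    exact hk.symm)
  rw [hdot] at hk
  exact ⟨k, hk.symm⟩

lemma ortho_exists {m : ℕ} {L : Submodule ℤ (Fin m → ℝ)} (hL : EvenL L)
    (hspan : Submodule.span ℝ (L : Set (Fin m → ℝ)) = ⊤) (k : ℕ) (hk : k ≤ m) :
    ∃ v : Fin k → (Fin m → ℝ), (∀ i, v i ∈ L) ∧ (∀ i, v i ≠ 0) ∧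
      ∀ i j, i ≠ j → v i ⬝ᵥ v j = 0 := by
  induction k with
  | zero => exact ⟨fun i => i.elim0, fun i => i.elim0, fun i => i.elim0, fun i => i.elim0⟩
  | succ k ih =>
    obtain ⟨v, hv, hv0, hvo⟩ := ih (by omega)
    have hne : Submodule.span ℝ (Set.range v) ≠ ⊤ := by
      intro h
      have h1 := finrank_range_le_card (R := ℝ) v
      rw [Set.finrank, h, finrank_top] at h1
      simp at h1
      omega
    obtain ⟨x, hxL, hx⟩ : ∃ x ∈ L, x ∉ Submodule.span ℝ (Set.range v) := by
      by_contra! h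
      apply hne
      rw [eq_top_iff, ← hspan, Submodule.span_le]
      exact h
    choose n hn using fun i => even_integral hL (hv i) (hv i)
    choose z hz using fun i => even_integral hL hxL (hv i)
    have hn0 : ∀ i, n i ≠ 0 := fun i h => by
      have := hn i
      rw [h] at this
      exact hv0 i (dotProduct_self_eq_zero.1 (by simpa using this))
    choose E hE using fun i => Finset.dvd_prod_of_mem n (Finset.mem_univ i)
    set D := ∏ i, n i with hD
    have hD0 : D ≠ 0 := Finset.prod_ne_zero_iff.2 fun i _ => hn0 i
    set u : Fin m → ℝ := D • x - ∑ i, (z i * E i) • v i with hu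
    have huL : u ∈ L := L.sub_mem (L.smul_mem _ hxL) (L.sum_mem fun i _ => L.smul_mem _ (hv i))
    have hu0 : u ≠ 0 := by
      intro h
      apply hx
      have h1 : D • x = ∑ i, (z i * E i) • v i := sub_eq_zero.1 h
      have h2 : x = (D:ℝ)⁻¹ • ((D:ℝ) • x) := by
        rw [smul_smul, inv_mul_cancel₀ (by exact_mod_cast hD0), one_smul]
      rw [h2, Int.cast_smul_eq_zsmul, h1]
      refine Submodule.smul_mem _ _ (Submodule.sum_mem _ fun i _ => ?_)
      rw [← Int.cast_smul_eq_zsmul ℝ]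
      exact Submodule.smul_mem _ _ (Submodule.subset_span ⟨i, rfl⟩)
    have huo : ∀ j, u ⬝ᵥ v j = 0 := by
      intro j
      rw [hu, sub_dotProduct, sum_dotProduct, Finset.sum_eq_single j]
      · rw [smul_dotProduct, smul_dotProduct, hz, hn, hE j]
        simp; ring
      · intro i _ hij
        rw [smul_dotProduct, hvo i j hij, smul_zero]
      · simp
    refine ⟨Fin.cons u v, ?_, ?_, ?_⟩
    · intro i; refine Fin.cases ?_ ?_ i
      · simpa using huL
      · intro j; simpa using hv j
    · intro i; refine Fin.cases ?_ ?_ i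
      · simpa using hu0
      · intro j; simpa using hv0 j
    · intro i j
      refine Fin.cases ?_ ?_ i
      · refine Fin.cases ?_ ?_ j
        · simp
        · intro j _; simpa using huo j
      · intro i
        refine Fin.cases ?_ ?_ j
        · intro _; rw [dotProduct_comm]; simpa using huo i
        · intro j h; simpa using hvo i j (by simpa using h)

lemma ortho_complete {m : ℕ} {v : Fin m → (Fin m → ℝ)} (hv0 : ∀ i, v i ≠ 0)
    (hvo : ∀ i j, i ≠ j → v i ⬝ᵥ v j = 0) (x : Fin m → ℝ) (hx : ∀ i, x ⬝ᵥ v i = 0) : x = 0 := by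
  have hli : LinearIndependent ℝ v := by
    rw [linearIndependent_iff']
    intro s g hg i hi
    have h1 : (∑ j ∈ s, g j • v j) ⬝ᵥ v i = 0 := by rw [hg, zero_dotProduct]
    rw [sum_dotProduct, Finset.sum_eq_single_of_mem i hi] at h1
    · rw [smul_dotProduct, smul_eq_mul] at h1
      exact (mul_eq_zero.1 h1).resolve_right fun h => hv0 i (dotProduct_self_eq_zero.1 h)
    · intro j _ hj
      rw [smul_dotProduct, hvo j i hj, smul_zero]
  have hs : Submodule.span ℝ (Set.range v) = ⊤ := by
    by_cases hm : m = 0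
    · subst hm; exact Subsingleton.elim _ _
    · exact hli.span_eq_top_of_card_eq_finrank' (by simp)
  have hx' : x ∈ Submodule.span ℝ (Set.range v) := by rw [hs]; trivial
  obtain ⟨c, hc⟩ := (Submodule.mem_span_range_iff_exists_fun ℝ).1 hx'
  have : x ⬝ᵥ x = 0 := by
    conv_lhs => rw [← hc, dotProduct_comm, hc]
    conv_lhs => rw [← hc, sum_dotProduct]
    rw [hc]
    refine Finset.sum_eq_zero fun i _ => ?_
    rw [smul_dotProduct, dotProduct_comm, hx, smul_zero]
  exact dotProduct_self_eq_zero.1 this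

lemma ortho_group {m : ℕ} {v : Fin m → (Fin m → ℝ)} (hv0 : ∀ i, v i ≠ 0)
    (hvo : ∀ i j, i ≠ j → v i ⬝ᵥ v j = 0) (n : Fin m → ℕ) (hn : ∀ i, v i ⬝ᵥ v i = n i)
    (hnpos : ∀ i, 0 < n i) (hL : EvenL (Submodule.span ℤ (Set.range v))) :
    ∃ e : (∀ i, Fin (n i)) ≃ DG (Submodule.span ℤ (Set.range v)),
      ∀ k, qf _ (e k) = ∏ i, cexp (Real.pi * I * ((k i : ℕ) : ℂ)^2 / n i) := by
  have hnR : ∀ i, (n i : ℝ) ≠ 0 := fun i => by exact_mod_cast (hnpos i).ne'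
  have hcomb : ∀ (c : Fin m → ℝ) j, (∑ i, c i • v i) ⬝ᵥ v j = c j * n j := by
    intro c j
    rw [sum_dotProduct, Finset.sum_eq_single j]
    · rw [smul_dotProduct, hn, smul_eq_mul]
    · intro i _ hij
      rw [smul_dotProduct, hvo i j hij, smul_zero]
    · simp
  have hmem : ∀ y, y ∈ Submodule.span ℤ (Set.range v) ↔ ∃ c : Fin m → ℤ, y = ∑ i, (c i : ℝ) • v i := by
    intro y
    rw [Submodule.mem_span_range_iff_exists_fun]
    refine exists_congr fun c => ?_
    simp only [Int.cast_smul_eq_zsmul]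
    exact eq_comm
  let w : (∀ i, Fin (n i)) → (Fin m → ℝ) := fun k => ∑ i, ((k i : ℕ) / (n i) : ℝ) • v i
  have hwv : ∀ k j, w k ⬝ᵥ v j = (k j : ℕ) := fun k j => by
    rw [hcomb]; field_simp [hnR j]
  have hw : ∀ k, w k ∈ dualLat (Submodule.span ℤ (Set.range v)) := by
    intro k y hy
    obtain ⟨c, rfl⟩ := (hmem y).1 hy
    refine ⟨∑ i, c i * (k i : ℕ), ?_⟩
    change w k ⬝ᵥ _ = _
    rw [dotProduct_sum]
    push_cast
    refine sum_congr rfl fun i _ => ?_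
    rw [dotProduct_smul, hwv, smul_eq_mul]
  have hbij : Function.Bijective (fun k => (Submodule.Quotient.mk ⟨w k, hw k⟩ :
      DG (Submodule.span ℤ (Set.range v)))) := by
    constructor
    · intro k k' h
      simp only [Submodule.Quotient.eq] at h
      have h' : w k - w k' ∈ Submodule.span ℤ (Set.range v) := by simpa using h
      obtain ⟨c, hc⟩ := (hmem _).1 h'
      ext j
      have h2 := congrArg (fun y => y ⬝ᵥ v j) hc
      simp only [sub_dotProduct, hwv, hcomb] at h2
      have h3 : ((k j : ℕ) : ℤ) - (k' j : ℕ) = c j * n j := by exact_mod_cast h2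
      have h4 := (k j).2
      have h5 := (k' j).2
      have h6 : ((k j : ℕ) : ℤ) ≡ (k' j : ℕ) [ZMOD n j] :=
        (Int.modEq_iff_dvd.2 ⟨-c j, by linarith⟩)
      exact Nat.ModEq.eq_of_lt_of_lt (Int.natCast_modEq_iff.1 h6) h4 h5
    · intro q
      obtain ⟨x, rfl⟩ := Submodule.Quotient.mk_surjective _ q
      choose z hz using fun i => x.2 (v i) (Submodule.subset_span ⟨i, rfl⟩)
      change ∀ i, x.1 ⬝ᵥ v i = _ at hz
      have hnz : ∀ i, (n i : ℤ) ≠ 0 := fun i => by exact_mod_cast (hnpos i).ne'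
      let k : ∀ i, Fin (n i) := fun i => ⟨(z i % n i).toNat, by
        have h1 := Int.emod_nonneg (z i) (hnz i)
        have h2 := Int.emod_lt_of_pos (z i) (by exact_mod_cast hnpos i : (0:ℤ) < n i)
        omega⟩
      have hk : ∀ i, (((k i : ℕ) : ℤ)) = z i % n i := fun i =>
        Int.toNat_of_nonneg (Int.emod_nonneg (z i) (hnz i))
      refine ⟨k, ?_⟩
      simp only [Submodule.Quotient.eq]
      change w k - x.1 ∈ Submodule.span ℤ (Set.range v)
      rw [hmem]
      refine ⟨fun i => -(z i / n i), ?_⟩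
      rw [← sub_eq_zero]
      refine ortho_complete hv0 hvo _ fun j => ?_
      rw [sub_dotProduct, sub_dotProduct, hwv, hz, hcomb]
      have h1 := Int.emod_add_mul_ediv (z j) (n j)
      rw [← hk] at h1
      have h2 : ((k j : ℕ) : ℝ) + (n j) * ((z j / n j : ℤ) : ℝ) = z j := by exact_mod_cast h1
      rw [← h2]; push_cast; ring
  refine ⟨Equiv.ofBijective _ hbij, fun k => ?_⟩
  rw [Equiv.ofBijective_apply, qf_mk hL, qe, ← Complex.exp_sum]
  congr 1
  have : w k ⬝ᵥ w k = ∑ i, ((k i : ℕ):ℝ)^2 / n i := by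
    conv_lhs => enter [2]; simp only [w]
    rw [dotProduct_sum]
    refine sum_congr rfl fun i _ => ?_
    rw [dotProduct_smul, hwv, smul_eq_mul]; ring
  simp only
  rw [this]
  push_cast
  rw [mul_sum]
  refine sum_congr rfl fun i _ => ?_
  ring

lemma milgram {m N : ℕ}
    (L : Submodule ℤ (Fin m → ℝ))
    (hfree : Module.Free ℤ L) (hfg : Module.Finite ℤ L)
    (hrank : Module.finrank ℤ L = m)
    (hspan : Submodule.span ℝ (L : Set (Fin m → ℝ)) = ⊤)
    (hL : EvenL L)
    (α : Fin N → (Fin m → ℝ)) (hα : ∀ ℓ, α ℓ ∈ dualLat L)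
    (hrep : Function.Bijective fun ℓ : Fin N =>
      (Submodule.Quotient.mk (⟨α ℓ, hα ℓ⟩ : ↥(dualLat L)) :
        (↥(dualLat L)) ⧸ L.comap (dualLat L).subtype)) :
    ∑ l, qe (α l) = Real.sqrt N * cexp (Real.pi * I / 4) ^ m := by
  -- absolute value
  have hnorm : ‖∑ l, qe (α l)‖ = Real.sqrt N := by
    let e := Equiv.ofBijective _ hrep
    let _ : Fintype (DG L) := Fintype.ofEquiv _ e
    have h1 := gabs_norm (qf L) (bchar L hL) (qf_add hL) (fun x => qe_norm _)
      (by rw [← Submodule.Quotient.mk_zero, qf_mk hL]; simp [qe]) (by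
        intro x hx
        obtain ⟨x, rfl⟩ := Submodule.Quotient.mk_surjective _ x
        rw [Submodule.Quotient.mk_eq_zero]
        refine dual_dual hfree hfg hrank hspan x.1 fun y hy => ?_
        have := hx (Submodule.Quotient.mk ⟨y, hy⟩)
        rw [bchar_mk, be_eq_one] at this
        exact this)
    rw [Fintype.card_congr e.symm, Fintype.card_fin, ← e.sum_comp] at h1
    rw [← h1]
    congr 1
    refine sum_congr rfl fun l _ => ?_
    exact (qf_mk hL ⟨α l, hα l⟩).symm
  -- argument
  obtain ⟨v, hv, hv0, hvo⟩ := ortho_exists hL hspan m le_rfl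
  have hle : Submodule.span ℤ (Set.range v) ≤ L := by
    rw [Submodule.span_le]; rintro _ ⟨i, rfl⟩; exact hv i
  have hL' : EvenL (Submodule.span ℤ (Set.range v)) := fun x hx => hL x (hle hx)
  set L' := Submodule.span ℤ (Set.range v) with hL'def
  have hn : ∀ i, ∃ a : ℕ, 0 < a ∧ v i ⬝ᵥ v i = ((a + a : ℕ) : ℝ) := by
    intro i
    obtain ⟨k, hk⟩ := hL _ (hv i)
    have h0 : 0 < v i ⬝ᵥ v i := lt_of_le_of_ne
      (Finset.sum_nonneg fun j _ => mul_self_nonneg _)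
      (fun h => hv0 i (dotProduct_self_eq_zero.1 h.symm))
    have hk0 : 0 < k := by
      rw [hk] at h0
      have : (0:ℝ) < k := by linarith
      exact_mod_cast this
    lift k to ℕ using hk0.le
    refine ⟨k, by exact_mod_cast hk0, ?_⟩
    rw [hk]; push_cast; ring
  choose a ha0 ha using hn
  obtain ⟨e, he⟩ := ortho_group hv0 hvo (fun i => a i + a i) ha (fun i => by have := ha0 i; omega) hL'
  let _ : Fintype (DG L') := Fintype.ofEquiv _ e
  have hsum : ∑ q, qf L' q = ((∏ i, Real.sqrt ((a i + a i : ℕ) : ℝ) : ℝ) : ℂ) * cexp (Real.pi * I / 4) ^ m := by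
    rw [← e.sum_comp]
    refine (sum_congr rfl fun k _ => he k).trans ?_
    rw [← Fintype.prod_sum (fun i (k : Fin (a i + a i)) => cexp (Real.pi * I * ((k : ℕ) : ℂ)^2 / ((a i + a i : ℕ) : ℂ)))]
    rw [Finset.prod_congr rfl fun i _ => gauss_even (a i + a i) (by have := ha0 i; omega) ⟨_, rfl⟩]
    rw [Finset.prod_mul_distrib]
    simp
  have hdle : dualLat L ≤ dualLat L' := fun x hx y hy => hx y (hle hy)
  have hLd : L ≤ dualLat L' := fun x hx y hy => even_integral hL hx (hle hy)
  let H : AddSubgroup (DG L') :=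
    ((L.comap (dualLat L').subtype).map (Submodule.mkQ (L'.comap (dualLat L').subtype))).toAddSubgroup
  have hH : ∀ x : dualLat L', (Submodule.Quotient.mk x : DG L') ∈ H ↔ x.1 ∈ L := by
    intro x
    constructor
    · rintro ⟨y, hy, hxy⟩
      have : y - x ∈ L'.comap (dualLat L').subtype := (Submodule.Quotient.eq _).1 hxy
      have h1 : y.1 - x.1 ∈ L := hle this
      have h2 : y.1 ∈ L := hy
      simpa using L.sub_mem h2 h1
    · intro hx
      exact ⟨x, hx, rfl⟩
  obtain ⟨c, hc0, hc⟩ := gabs_sub (qf L') (bchar L' hL') (qf_add hL') H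
    (by
      intro h hh
      obtain ⟨x, rfl⟩ := Submodule.Quotient.mk_surjective _ h
      rw [qf_mk hL']
      exact qe_eq_one hL ((hH x).1 hh))
    (fun l => (Submodule.Quotient.mk ⟨α l, hdle (hα l)⟩ : DG L'))
    (by
      intro l h hh
      obtain ⟨x, rfl⟩ := Submodule.Quotient.mk_surjective _ h
      rw [bchar_mk hL']
      exact be_dual (hα l) ((hH x).1 hh))
    (by
      intro x hx
      obtain ⟨x, rfl⟩ := Submodule.Quotient.mk_surjective _ x
      have hxd : x.1 ∈ dualLat L := by
        intro y hy
        have := hx (Submodule.Quotient.mk ⟨y, hLd hy⟩) ((hH _).2 hy)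
        rw [bchar_mk, be_eq_one] at this
        exact this
      obtain ⟨l, hl⟩ := hrep.2 (Submodule.Quotient.mk ⟨x.1, hxd⟩)
      refine ⟨l, ?_⟩
      rw [← Submodule.Quotient.mk_sub, hH]
      exact (Submodule.Quotient.eq (L.comap (dualLat L).subtype)).1 hl.symm)
    (by
      intro l l' h
      rw [← Submodule.Quotient.mk_sub, hH] at h
      exact hrep.1 ((Submodule.Quotient.eq (L.comap (dualLat L).subtype)).2 h))
  simp only [qf_mk hL'] at hc
  rw [hsum] at hc
  have hcR : (c:ℂ) ≠ 0 := by exact_mod_cast hc0.ne'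
  set P := ∏ i, Real.sqrt ((a i + a i : ℕ) : ℝ)
  have hP : 0 ≤ P := Finset.prod_nonneg fun i _ => Real.sqrt_nonneg _
  have hG : ∑ l, qe (α l) = ((P / c : ℝ) : ℂ) * cexp (Real.pi * I / 4) ^ m := by
    push_cast
    field_simp
    rw [hc]; ring
  have hu : ‖cexp (Real.pi * I / 4) ^ m‖ = 1 := by
    rw [norm_pow, show (Real.pi * I / 4 : ℂ) = ((Real.pi / 4 : ℝ) : ℂ) * I by push_cast; ring,
      Complex.norm_exp_ofReal_mul_I, one_pow]
  rw [hG, norm_mul, hu, mul_one, Complex.norm_real, Real.norm_of_nonneg (by positivity)] at hnorm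
  rw [hG, hnorm]

/-- For a full-rank even lattice `L ⊆ ℝ^m` with `N = |L^*/L|`, coset
representatives `α_ℓ`, and the matrices `T_{ℓℓ'} = e^{πi(⟨α_ℓ,α_ℓ⟩ - m/12)} δ_{ℓℓ'}` and
`S_{ℓℓ'} = N^{-1/2} e^{-2πi⟨α_ℓ,α_{ℓ'}⟩}`, one has `(S·T)³ = S²`. -/
theorem lattice_ST_cubed_eq_S_squared {m N : ℕ}
    (L : Submodule ℤ (Fin m → ℝ))
    (hfree : Module.Free ℤ L) (hfg : Module.Finite ℤ L)
    (hrank : Module.finrank ℤ L = m)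
    (hspan : Submodule.span ℝ (L : Set (Fin m → ℝ)) = ⊤)
    (heven : ∀ x ∈ L, ∃ k : ℤ, ∑ i, x i * x i = 2 * (k : ℝ))
    (hcard : Nat.card ((↥(dualLat L)) ⧸ L.comap (dualLat L).subtype) = N)
    (α : Fin N → (Fin m → ℝ)) (hα : ∀ ℓ, α ℓ ∈ dualLat L)
    (hrep : Function.Bijective fun ℓ : Fin N =>
      (Submodule.Quotient.mk (⟨α ℓ, hα ℓ⟩ : ↥(dualLat L)) :
        (↥(dualLat L)) ⧸ L.comap (dualLat L).subtype))
    (S T : Matrix (Fin N) (Fin N) ℂ)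
    (hT : ∀ ℓ ℓ', T ℓ ℓ' = Complex.exp ((Real.pi : ℂ) * Complex.I *
        (((∑ i, α ℓ i * α ℓ i : ℝ) : ℂ) - (m : ℂ) / 12)) * (if ℓ = ℓ' then 1 else 0))
    (hS : ∀ ℓ ℓ', S ℓ ℓ' = (1 / Real.sqrt N : ℝ) *
      Complex.exp (-2 * (Real.pi : ℂ) * Complex.I * ((∑ i, α ℓ i * α ℓ' i : ℝ) : ℂ))) :
    (S * T) ^ 3 = S ^ 2 := by
  have hL : EvenL L := heven
  have hG := milgram L hfree hfg hrank hspan hL α hα hrep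
  have hN : 0 < N := by
    obtain ⟨l, _⟩ := hrep.2 0
    exact l.pos
  -- shifted Gauss sums
  have hshift : ∀ y ∈ dualLat L, ∑ l, qe (α l - y) = ∑ l, qe (α l) := by
    intro y hy
    let e := Equiv.ofBijective _ hrep
    have he : ∀ l, e l = (Submodule.Quotient.mk ⟨α l, hα l⟩ : DG L) := fun l => rfl
    let y' : DG L := Submodule.Quotient.mk ⟨y, hy⟩
    have h1 : ∀ l, qe (α l) = qf L (e l) := fun l => (qf_mk hL ⟨α l, hα l⟩).symm
    have h2 : ∀ l, qe (α l - y) = qf L (e ((e.trans ((Equiv.subRight y').trans e.symm)) l)) := by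
      intro l
      simp only [Equiv.trans_apply, Equiv.apply_symm_apply, Equiv.subRight_apply]
      rw [he, ← Submodule.Quotient.mk_sub, qf_mk hL]
      rfl
    simp only [h1, h2]
    exact (e.trans ((Equiv.subRight y').trans e.symm)).sum_comp (fun l => qf L (e l))
  set t : ℂ := cexp (-(Real.pi * I * m / 12)) with ht
  have ht3 : t ^ 3 * cexp (Real.pi * I / 4) ^ m = 1 := by
    rw [ht, ← Complex.exp_nat_mul, ← Complex.exp_nat_mul, ← Complex.exp_add, ← Complex.exp_zero]
    congr 1; push_cast; ring
  have hTd : T = Matrix.diagonal (fun l => qe (α l) * t) := by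
    ext l l'
    rw [hT, Matrix.diagonal_apply]
    split_ifs with h
    · rw [mul_one, qe, ht, ← Complex.exp_add]
      congr 1
      simp only [dotProduct]
      ring
    · simp
  have hs : ((1 / Real.sqrt N : ℝ) : ℂ) * Real.sqrt N = 1 := by
    rw [← Complex.ofReal_mul, one_div_mul_cancel (Real.sqrt_pos.2 (by exact_mod_cast hN)).ne',
      Complex.ofReal_one]
  set s : ℂ := ((1 / Real.sqrt N : ℝ) : ℂ) with hsdef
  have hS' : ∀ l l', S l l' = s * be (α l) (-α l') := by
    intro l l'
    rw [hS, be]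
    congr 2
    rw [dotProduct_neg]
    simp only [dotProduct]
    push_cast; ring
  have key : T * (S * T * S) * T = S := by
    ext i j
    rw [hTd, Matrix.mul_diagonal, Matrix.diagonal_mul, ← hTd]
    rw [Matrix.mul_apply, hTd]
    simp only [Matrix.mul_diagonal, hS']
    have hterm : ∀ l, qe (α i) * qe (α j) * (be (α i) (-α l) * qe (α l) * be (α l) (-α j)) =
        be (α i) (-α j) * qe (α l - (α i + α j)) := by
      intro l
      simp only [qe, be, ← Complex.exp_add]
      congr 1
      simp only [dotProduct_add, add_dotProduct, dotProduct_sub, sub_dotProduct, dotProduct_neg]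
      rw [dotProduct_comm (α l) (α i), dotProduct_comm (α l) (α j), dotProduct_comm (α j) (α i)]
      push_cast; ring
    have hsum : qe (α i) * qe (α j) * ∑ l, (be (α i) (-α l) * qe (α l) * be (α l) (-α j)) =
        be (α i) (-α j) * (Real.sqrt N * cexp (Real.pi * I / 4) ^ m) := by
      rw [mul_sum, sum_congr rfl fun l _ => hterm l, ← mul_sum,
        hshift _ ((dualLat L).add_mem (hα i) (hα j)), hG]
    have : ∑ x, s * be (α i) (-α x) * (qe (α x) * t) * (s * be (α x) (-α j)) =
        s^2 * t * ∑ l, (be (α i) (-α l) * qe (α l) * be (α l) (-α j)) := by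
      rw [mul_sum]
      refine sum_congr rfl fun l _ => ?_
      ring
    rw [this]
    linear_combination (s^2 * t^3) * hsum + (s * be (α i) (-α j)) * ht3 * (s * Real.sqrt N) +
      (s * be (α i) (-α j)) * hs
  calc (S * T)^3 = S * (T * (S * T * S) * T) := by
        simp only [pow_succ, pow_zero, one_mul, Matrix.mul_assoc]
    _ = S ^ 2 := by rw [key, sq]

end
end

section
/- Let Γ ⊆ ℝ^m be a full-rank lattice with dual Γ^*, let B be a real antisymmetric m×m matrix (acting on row vectors by right multiplication), and define the Narain lattice Λ_S := {(1/√2)(μ + λ(𝟙+B), μ − λ(𝟙−B)) : μ ∈ Γ^*, λ ∈ Γ} ⊆ ℝ^m × ℝ^m. Define Λ_l^0 := {(μ, λ) ∈ Γ^* × Γ : μ = λ(𝟙−B)} and Λ_r^0 := {(μ, λ) ∈ Γ^* × Γ : μ = −λ(𝟙+B)}, and let G' be the invertible linear map of ℝ^m × ℝ^m sending (μ, λ) to (1/√2)(μ + λ(𝟙+B), μ + λ(−𝟙+B)). Then G' maps Λ_l^0 bijectively onto {(α, 0) : α ∈ (Λ_S)_1^0} and maps Λ_r^0 bijectively onto {(0,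 β) : β ∈ (Λ_S)_2^0}; consequently rank (Λ_S)_1^0 = rank Λ_l^0 and rank (Λ_S)_2^0 = rank Λ_r^0, so Wendland's rationality conditions rank Λ_l^0 = m and rank Λ_r^0 = m are equivalent to rank (Λ_S)_1^0 = m and rank (Λ_S)_2^0 = m respectively. -/
open Finset Complex

noncomputable section

variable {m : ℕ}

/-- The linear map `(μ, λ) ↦ (1/√2)(μ + λ(𝟙+B), μ - λ(𝟙-B))` defining the Narain lattice
`Λ_S` (row vectors, matrices acting by right multiplication). -/
def narainG (B : Matrix (Fin m) (Fin m) ℝ) :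
    ((Fin m → ℝ) × (Fin m → ℝ)) →ₗ[ℝ] ((Fin m → ℝ) × (Fin m → ℝ)) :=
  LinearMap.prod
    ((Real.sqrt 2)⁻¹ •
      (LinearMap.fst ℝ (Fin m → ℝ) (Fin m → ℝ) +
        (Matrix.vecMulLinear (1 + B)).comp (LinearMap.snd ℝ (Fin m → ℝ) (Fin m → ℝ))))
    ((Real.sqrt 2)⁻¹ •
      (LinearMap.fst ℝ (Fin m → ℝ) (Fin m → ℝ) -
        (Matrix.vecMulLinear (1 - B)).comp (LinearMap.snd ℝ (Fin m → ℝ) (Fin m → ℝ))))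

/-- The linear map `G' : (μ, λ) ↦ (1/√2)(μ + λ(𝟙+B), μ + λ(-𝟙+B))`. -/
def narainG' (B : Matrix (Fin m) (Fin m) ℝ) :
    ((Fin m → ℝ) × (Fin m → ℝ)) →ₗ[ℝ] ((Fin m → ℝ) × (Fin m → ℝ)) :=
  LinearMap.prod
    ((Real.sqrt 2)⁻¹ •
      (LinearMap.fst ℝ (Fin m → ℝ) (Fin m → ℝ) +
        (Matrix.vecMulLinear (1 + B)).comp (LinearMap.snd ℝ (Fin m → ℝ) (Fin m → ℝ))))
    ((Real.sqrt 2)⁻¹ •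
      (LinearMap.fst ℝ (Fin m → ℝ) (Fin m → ℝ) +
        (Matrix.vecMulLinear (-1 + B)).comp (LinearMap.snd ℝ (Fin m → ℝ) (Fin m → ℝ))))

/-- The Narain lattice `Λ_S = {(1/√2)(μ + λ(𝟙+B), μ - λ(𝟙-B)) : μ ∈ Γ^*, λ ∈ Γ}`. -/
def narainLatS (Γ : Submodule ℤ (Fin m → ℝ)) (B : Matrix (Fin m) (Fin m) ℝ) :
    Submodule ℤ ((Fin m → ℝ) × (Fin m → ℝ)) :=
  Submodule.map ((narainG B).restrictScalars ℤ) ((dualLat Γ).prod Γ)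

/-- `Λ_l^0 = {(μ, λ) ∈ Γ^* × Γ : μ = λ(𝟙-B)}`. -/
def wendLatL (Γ : Submodule ℤ (Fin m → ℝ)) (B : Matrix (Fin m) (Fin m) ℝ) :
    Submodule ℤ ((Fin m → ℝ) × (Fin m → ℝ)) :=
  ((dualLat Γ).prod Γ) ⊓
    LinearMap.ker ((LinearMap.fst ℝ (Fin m → ℝ) (Fin m → ℝ) -
      (Matrix.vecMulLinear (1 - B)).comp
        (LinearMap.snd ℝ (Fin m → ℝ) (Fin m → ℝ))).restrictScalars ℤ)

/-- `Λ_r^0 = {(μ, λ) ∈ Γ^* × Γ : μ = -λ(𝟙+B)}`. -/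
def wendLatR (Γ : Submodule ℤ (Fin m → ℝ)) (B : Matrix (Fin m) (Fin m) ℝ) :
    Submodule ℤ ((Fin m → ℝ) × (Fin m → ℝ)) :=
  ((dualLat Γ).prod Γ) ⊓
    LinearMap.ker ((LinearMap.fst ℝ (Fin m → ℝ) (Fin m → ℝ) +
      (Matrix.vecMulLinear (1 + B)).comp
        (LinearMap.snd ℝ (Fin m → ℝ) (Fin m → ℝ))).restrictScalars ℤ)

/-- The sublattice `Λ₁⁰ = {α : (α,0) ∈ Λ}` of a lattice `Λ ⊆ ℝ^m × ℝ^m`. -/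
def lat10' (Λ : Submodule ℤ ((Fin m → ℝ) × (Fin m → ℝ))) : Submodule ℤ (Fin m → ℝ) :=
  Λ.comap (LinearMap.inl ℤ (Fin m → ℝ) (Fin m → ℝ))

/-- The sublattice `Λ₂⁰ = {β : (0,β) ∈ Λ}` of a lattice `Λ ⊆ ℝ^m × ℝ^m`. -/
def lat20' (Λ : Submodule ℤ ((Fin m → ℝ) × (Fin m → ℝ))) : Submodule ℤ (Fin m → ℝ) :=
  Λ.comap (LinearMap.inr ℤ (Fin m → ℝ) (Fin m → ℝ))

theorem narainG_eq (B : Matrix (Fin m) (Fin m) ℝ) : narainG B = narainG' B := by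
  have h : (-1 + B) = -(1 - B) := by abel
  refine LinearMap.ext fun p => ?_
  simp only [narainG, narainG', h, LinearMap.prod_apply, Function.prod, LinearMap.smul_apply,
    LinearMap.add_apply, LinearMap.sub_apply, LinearMap.comp_apply,
    Matrix.vecMulLinear_apply, Matrix.vecMul_neg, sub_eq_add_neg, LinearMap.neg_apply]

theorem narainG_apply (B : Matrix (Fin m) (Fin m) ℝ) (p : (Fin m → ℝ) × (Fin m → ℝ)) :
    narainG B p = ((Real.sqrt 2)⁻¹ • (p.1 + Matrix.vecMul p.2 (1 + B)),
      (Real.sqrt 2)⁻¹ • (p.1 - Matrix.vecMul p.2 (1 - B))) := rfl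

theorem narainG_inj (B : Matrix (Fin m) (Fin m) ℝ) : Function.Injective (narainG B) := by
  rw [← LinearMap.ker_eq_bot, LinearMap.ker_eq_bot']
  rintro ⟨μ, l⟩ h
  rw [narainG_apply, Prod.mk_eq_zero] at h
  have hs : (Real.sqrt 2)⁻¹ ≠ 0 := by positivity
  obtain ⟨h1, h2⟩ := h
  have h1 := (smul_eq_zero.mp h1).resolve_left hs
  have h2 := (smul_eq_zero.mp h2).resolve_left hs
  simp only [Matrix.vecMul_add, Matrix.vecMul_sub, Matrix.vecMul_one] at h1 h2
  have hl : l = 0 := by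
    ext i
    have a := congrFun h1 i
    have b := congrFun h2 i
    simp only [Pi.add_apply, Pi.sub_apply, Pi.zero_apply] at a b ⊢
    linarith
  subst hl
  simpa using h1

theorem mapL (Γ : Submodule ℤ (Fin m → ℝ)) (B : Matrix (Fin m) (Fin m) ℝ) :
    (wendLatL Γ B).map ((narainG B).restrictScalars ℤ) =
      (lat10' (narainLatS Γ B)).map (LinearMap.inl ℤ (Fin m → ℝ) (Fin m → ℝ)) := by
  have hs : (Real.sqrt 2)⁻¹ ≠ 0 := by positivity
  ext q
  constructor
  · rintro ⟨p, ⟨hp, hk⟩, rfl⟩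
    have hk : p.1 - Matrix.vecMul p.2 (1 - B) = 0 := hk
    have e : narainG B p = ((narainG B p).1, 0) := by
      rw [narainG_apply, hk, smul_zero]
    refine ⟨(narainG B p).1, ?_, e.symm⟩
    change ((narainG B p).1, (0 : Fin m → ℝ)) ∈ narainLatS Γ B
    rw [← e]
    exact ⟨p, hp, rfl⟩
  · rintro ⟨a, ⟨p, hp, hq⟩, rfl⟩
    refine ⟨p, ⟨hp, ?_⟩, hq⟩
    have h2 : (narainG B p).2 = 0 := congrArg Prod.snd hq
    rw [narainG_apply] at h2
    exact (smul_eq_zero.mp h2).resolve_left hs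

theorem mapR (Γ : Submodule ℤ (Fin m → ℝ)) (B : Matrix (Fin m) (Fin m) ℝ) :
    (wendLatR Γ B).map ((narainG B).restrictScalars ℤ) =
      (lat20' (narainLatS Γ B)).map (LinearMap.inr ℤ (Fin m → ℝ) (Fin m → ℝ)) := by
  have hs : (Real.sqrt 2)⁻¹ ≠ 0 := by positivity
  ext q
  constructor
  · rintro ⟨p, ⟨hp, hk⟩, rfl⟩
    have hk : p.1 + Matrix.vecMul p.2 (1 + B) = 0 := hk
    have e : narainG B p = (0, (narainG B p).2) := by
      rw [narainG_apply, hk, smul_zero]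
    refine ⟨(narainG B p).2, ?_, e.symm⟩
    change ((0 : Fin m → ℝ), (narainG B p).2) ∈ narainLatS Γ B
    rw [← e]
    exact ⟨p, hp, rfl⟩
  · rintro ⟨a, ⟨p, hp, hq⟩, rfl⟩
    refine ⟨p, ⟨hp, ?_⟩, hq⟩
    have h2 : (narainG B p).1 = 0 := congrArg Prod.fst hq
    rw [narainG_apply] at h2
    exact (smul_eq_zero.mp h2).resolve_left hs

/-- Wendland's rationality conditions: `G'` maps `Λ_l^0` bijectively onto
`{(α,0) : α ∈ (Λ_S)₁⁰}` and `Λ_r^0` bijectively onto `{(0,β) : β ∈ (Λ_S)₂⁰}`; consequently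
`rk (Λ_S)₁⁰ = rk Λ_l^0` and `rk (Λ_S)₂⁰ = rk Λ_r^0`, so `rk Λ_l^0 = m ↔ rk (Λ_S)₁⁰ = m` and
`rk Λ_r^0 = m ↔ rk (Λ_S)₂⁰ = m`. -/
theorem wendland_comparison (Γ : Submodule ℤ (Fin m → ℝ))
    (hfree : Module.Free ℤ Γ) (hfg : Module.Finite ℤ Γ)
    (hspan : Submodule.span ℝ (Γ : Set (Fin m → ℝ)) = ⊤)
    (B : Matrix (Fin m) (Fin m) ℝ) (hB : B.transpose = -B) :
    Function.Bijective (narainG' B) ∧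
    Set.BijOn (narainG' B) (wendLatL Γ B : Set ((Fin m → ℝ) × (Fin m → ℝ)))
      ((fun α => (α, (0 : Fin m → ℝ))) '' (lat10' (narainLatS Γ B) : Set (Fin m → ℝ))) ∧
    Set.BijOn (narainG' B) (wendLatR Γ B : Set ((Fin m → ℝ) × (Fin m → ℝ)))
      ((fun β => ((0 : Fin m → ℝ), β)) '' (lat20' (narainLatS Γ B) : Set (Fin m → ℝ))) ∧
    Module.finrank ℤ (lat10' (narainLatS Γ B)) = Module.finrank ℤ (wendLatL Γ B) ∧
    Module.finrank ℤ (lat20' (narainLatS Γ B)) = Module.finrank ℤ (wendLatR Γ B) ∧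
    (Module.finrank ℤ (wendLatL Γ B) = m ↔ Module.finrank ℤ (lat10' (narainLatS Γ B)) = m) ∧
    (Module.finrank ℤ (wendLatR Γ B) = m ↔ Module.finrank ℤ (lat20' (narainLatS Γ B)) = m) := by
  have hi := narainG_inj B
  have hi' : Function.Injective ((narainG B).restrictScalars ℤ) := hi
  have hL : Module.finrank ℤ (lat10' (narainLatS Γ B)) = Module.finrank ℤ (wendLatL Γ B) := by
    rw [((wendLatL Γ B).equivMapOfInjective _ hi').finrank_eq, mapL]
    exact ((lat10' (narainLatS Γ B)).equivMapOfInjective _ LinearMap.inl_injective).finrank_eq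
  have hR : Module.finrank ℤ (lat20' (narainLatS Γ B)) = Module.finrank ℤ (wendLatR Γ B) := by
    rw [((wendLatR Γ B).equivMapOfInjective _ hi').finrank_eq, mapR]
    exact ((lat20' (narainLatS Γ B)).equivMapOfInjective _ LinearMap.inr_injective).finrank_eq
  rw [← narainG_eq]
  refine ⟨⟨hi, LinearMap.injective_iff_surjective.mp hi⟩, ?_, ?_, hL, hR, by rw [hL], by rw [hR]⟩
  · have e := congrArg (fun S : Submodule ℤ _ => (S : Set ((Fin m → ℝ) × (Fin m → ℝ)))) (mapL Γ B)
    simp only [Submodule.map_coe] at e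
    have := hi.injOn.bijOn_image (s := (wendLatL Γ B : Set ((Fin m → ℝ) × (Fin m → ℝ))))
    exact e ▸ this
  · have e := congrArg (fun S : Submodule ℤ _ => (S : Set ((Fin m → ℝ) × (Fin m → ℝ)))) (mapR Γ B)
    simp only [Submodule.map_coe] at e
    have := hi.injOn.bijOn_image (s := (wendLatR Γ B : Set ((Fin m → ℝ) × (Fin m → ℝ))))
    exact e ▸ this

end
end
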